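/- arXiv:2102.06497 — 2 statements merged into one kernel-verified Lean document; each statement's English description precedes it below -/
import Mathlib

section
/- Let 3/2 < q < ∞, p = 2q/(2q−3), and 1 ≤ p* < p. Let g : (−1,0) → [0,∞) be measurable with g ∈ L^{p,1}(−1,0). Then Σ_{k=0}^{∞} r_k^{2 − 2/p* − 3/q} (∫_{−r_k²}^{0} g(s)^{p*} ds)^{1/p*} ≤ C ‖g‖_{L^{p,1}(−1,0)}, where r_k = 2^{−k} and C depends only on p, p*, q. -/
open MeasureTheory ENNReal

noncomputable section

/-- The Lorentz norm `‖g‖_{L^{p,1}(−1,0)}` of a nonnegative function on `(−1,0)`: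
`‖g‖_{p,1} = p ∫₀^∞ |{s ∈ (−1,0) : g(s) > t}|^{1/p} dt`. -/
def lorentzNorm1 (g : ℝ → ℝ) (p : ℝ) : ℝ≥0∞ :=
  ENNReal.ofReal p * ∫⁻ t in Set.Ioi (0 : ℝ),
    ((volume.restrict (Set.Ioo (-1 : ℝ) 0)) {s : ℝ | t < g s}) ^ (1 / p)

/-!
Let `φ` be the distribution function of `g` on `(-1, 0)` and `r = p*`. The scaling relation turns
the weight `r_k^(2 - 2/r - 3/q)` into `x^(1/p - 1/r)` with `x = r_k² = 4⁻ᵏ`. On an interval of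
length `x` the distribution function is at most `min (φ t) x`, so by the embedding `L^{r,1} ⊆ L^r`
the `k`-th term is at most a multiple of `∫ x^(1/p - 1/r) * min (φ t) x ^ (1/r) dt`. For fixed `t`
the integrand increases geometrically in `k` as long as `φ t ≤ 4⁻ᵏ` and decreases geometrically
afterwards, so its sum over `k` is bounded by a multiple of the peak value `φ t ^ (1/p)`, whose
integral is the `L^{p,1}` norm up to the factor `p`.
-/

section GeometricSums

variable {a b : ℝ} {ρ m : ℝ≥0∞} {j : ℕ}

lemma ennreal_rpow_sub_mul_rpow_le {x y : ℝ≥0∞} (hx₀ : x ≠ 0) (hx : x ≠ ⊤) (hb : 0 ≤ b)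
    (hba : b ≤ a) (h : m ≤ y * x) : x ^ (b - a) * m ^ a ≤ y ^ (a - b) * m ^ b := by
  have hab : 0 ≤ a - b := sub_nonneg.2 hba
  calc x ^ (b - a) * m ^ a = x ^ (b - a) * (m ^ (a - b) * m ^ b) := by
        rw [← ENNReal.rpow_add_of_nonneg _ _ hab hb, sub_add_cancel]
    _ ≤ x ^ (b - a) * ((y * x) ^ (a - b) * m ^ b) := by gcongr
    _ = x ^ (b - a) * x ^ (a - b) * (y ^ (a - b) * m ^ b) := by
        rw [ENNReal.mul_rpow_of_nonneg _ _ hab]; ring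
    _ = y ^ (a - b) * m ^ b := by
        rw [← ENNReal.rpow_add _ _ hx₀ hx, sub_add_sub_cancel, sub_self, ENNReal.rpow_zero, one_mul]

lemma ennreal_pow_rpow_comm (x : ℝ≥0∞) (n : ℕ) (c : ℝ) : (x ^ n) ^ c = (x ^ c) ^ n := by
  rw [← ENNReal.rpow_natCast_mul, mul_comm, ENNReal.rpow_mul_natCast]

lemma sum_range_pow_rpow_mul_rpow_le (hρ₀ : ρ ≠ 0) (hρ : ρ ≠ ⊤) (hb : 0 ≤ b) (hba : b ≤ a)
    (h : ∀ k < j, m ≤ ρ ^ k) :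
    ∑ k ∈ Finset.range j, (ρ ^ k) ^ (b - a) * m ^ a ≤ (1 - ρ ^ (a - b))⁻¹ * m ^ b := by
  rw [← Finset.sum_range_reflect, ← ENNReal.tsum_geometric, ← ENNReal.tsum_mul_right]
  refine (Finset.sum_le_sum fun i hi => ?_).trans (ENNReal.sum_le_tsum (Finset.range j))
  have hij : i < j := Finset.mem_range.1 hi
  rw [← ennreal_pow_rpow_comm]
  refine ennreal_rpow_sub_mul_rpow_le (pow_ne_zero _ hρ₀) (ENNReal.pow_ne_top hρ) hb hba ?_
  rw [← pow_add, show i + (j - 1 - i) = j - 1 by omega]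
  exact h _ (by omega)

lemma tsum_pow_add_rpow_le (hb : 0 ≤ b) (h : ρ ^ j ≤ m) :
    ∑' i, (ρ ^ (i + j)) ^ b ≤ (1 - ρ ^ b)⁻¹ * m ^ b := by
  rw [← ENNReal.tsum_geometric, ← ENNReal.tsum_mul_right]
  refine ENNReal.tsum_le_tsum fun i => ?_
  rw [pow_add, ENNReal.mul_rpow_of_nonneg _ _ hb, ennreal_pow_rpow_comm]
  gcongr

lemma tsum_pow_rpow_mul_min_rpow_le (hρ₀ : ρ ≠ 0) (hρ₁ : ρ < 1) (hb : 0 < b) (hba : b ≤ a) :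
    ∑' k : ℕ, (ρ ^ k) ^ (b - a) * (min m (ρ ^ k)) ^ a ≤
      ((1 - ρ ^ (a - b))⁻¹ + (1 - ρ ^ b)⁻¹) * m ^ b := by
  have ha : 0 < a := hb.trans_le hba
  have hρ : ρ ≠ ⊤ := hρ₁.ne_top
  rcases eq_or_ne m 0 with rfl | hm
  · simp [ENNReal.zero_rpow_of_pos ha]
  have h_crossing : ∃ k : ℕ, ρ ^ k < m :=
    ((ENNReal.tendsto_pow_atTop_nhds_zero_of_lt_one hρ₁).eventually_lt_const
      (pos_iff_ne_zero.2 hm)).exists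
  rw [← Summable.sum_add_tsum_nat_add' (k := Nat.find h_crossing) ENNReal.summable, add_mul]
  gcongr ?_ + ?_
  · refine le_trans ?_ (sum_range_pow_rpow_mul_rpow_le hρ₀ hρ hb.le hba
      fun k hk => not_lt.1 (Nat.find_min h_crossing hk))
    gcongr
    exact min_le_left _ _
  · refine le_trans (ENNReal.tsum_le_tsum fun i => ?_)
      (tsum_pow_add_rpow_le hb.le (Nat.find_spec h_crossing).le)
    set x := ρ ^ (i + Nat.find h_crossing)
    calc x ^ (b - a) * min m x ^ a ≤ x ^ (b - a) * x ^ a := by gcongr; exact min_le_right _ _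
      _ = x ^ b := by
        rw [← ENNReal.rpow_add _ _ (pow_ne_zero _ hρ₀) (ENNReal.pow_ne_top hρ), sub_add_cancel]

lemma exists_tsum_pow_rpow_mul_min_rpow_le (hρ₀ : ρ ≠ 0) (hρ₁ : ρ < 1) (hb : 0 < b)
    (hba : b < a) :
    ∃ C : ℝ≥0∞, 0 < C ∧ C ≠ ⊤ ∧ ∀ m : ℝ≥0∞,
      ∑' k : ℕ, (ρ ^ k) ^ (b - a) * (min m (ρ ^ k)) ^ a ≤ C * m ^ b := by
  have h_pos (c : ℝ) : 0 < (1 - ρ ^ c)⁻¹ :=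
    ENNReal.inv_pos.2 (ne_top_of_le_ne_top ENNReal.one_ne_top tsub_le_self)
  have h_ne_top {c : ℝ} (hc : 0 < c) : (1 - ρ ^ c)⁻¹ ≠ ⊤ :=
    ENNReal.inv_ne_top.2 (tsub_pos_of_lt (ENNReal.rpow_lt_one hρ₁ hc)).ne'
  exact ⟨_, (h_pos _).trans_le le_self_add,
    ENNReal.add_ne_top.2 ⟨h_ne_top (sub_pos.2 hba), h_ne_top hb⟩,
    fun _ => tsum_pow_rpow_mul_min_rpow_le hρ₀ hρ₁ hb hba.le⟩

end GeometricSums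

section Lorentz

variable {α E : Type*} [MeasurableSpace α] [NormedAddCommGroup E]

/-- The Lorentz norm `‖f‖_{L^{p,1}(μ)} = p ∫₀^∞ μ {‖f‖ > t}^{1/p} dt` on an arbitrary measure
space, normalized like `lorentzNorm1`; it measures `f` on the right-hand side of the dyadic sum. -/
def eLorentzNormOne (f : α → E) (p : ℝ) (μ : Measure α) : ℝ≥0∞ :=
  ENNReal.ofReal p * ∫⁻ t in Set.Ioi (0 : ℝ), μ {x | t < ‖f x‖} ^ (1 / p)

lemma antitone_measure_lt (f : α → ℝ) (μ : Measure α) : Antitone fun t => μ {x | t < f x} :=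
  fun _ _ hst => measure_mono fun _ hx => hst.trans_lt hx

lemma ofReal_mul_le_setLIntegral_Ioi_of_antitone {φ : ℝ → ℝ≥0∞} (hφ : Antitone φ) (t : ℝ) :
    ENNReal.ofReal t * φ t ≤ ∫⁻ s in Set.Ioi 0, φ s := by
  calc ENNReal.ofReal t * φ t = ∫⁻ _ in Set.Ioo 0 t, φ t := by
        rw [setLIntegral_const, Real.volume_Ioo, sub_zero, mul_comm]
    _ ≤ ∫⁻ s in Set.Ioo 0 t, φ s := setLIntegral_mono' measurableSet_Ioo fun s hs => hφ hs.2.le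
    _ ≤ ∫⁻ s in Set.Ioi 0, φ s := lintegral_mono_set Set.Ioo_subset_Ioi_self

lemma lintegral_enorm_rpow_eq_lintegral_meas_lt_mul {f : α → E} {r : ℝ} {μ : Measure α}
    (hf : AEStronglyMeasurable f μ) (hr : 0 < r) :
    ∫⁻ x, ‖f x‖ₑ ^ r ∂μ = ENNReal.ofReal r *
      ∫⁻ t in Set.Ioi (0 : ℝ), μ {x | t < ‖f x‖} * ENNReal.ofReal (t ^ (r - 1)) := by
  rw [← lintegral_rpow_eq_lintegral_meas_lt_mul μ (.of_forall fun x => norm_nonneg (f x))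
    hf.norm.aemeasurable hr]
  simp only [← ENNReal.ofReal_rpow_of_nonneg (norm_nonneg _) hr.le, ofReal_norm]

-- Antitonicity gives `t * φ t ^ (1/r) ≤ A := ∫ φ ^ (1/r)`; raise this to the power `r - 1`.
lemma setLIntegral_Ioi_mul_rpow_le_of_antitone {φ : ℝ → ℝ≥0∞} {r : ℝ} (hφ : Antitone φ)
    (hr : 1 ≤ r) :
    ∫⁻ t in Set.Ioi 0, φ t * ENNReal.ofReal (t ^ (r - 1)) ≤
      (∫⁻ t in Set.Ioi 0, φ t ^ (1 / r)) ^ r := by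
  have hr₀ : 0 < r := by linarith
  have hr₁ : 0 ≤ r - 1 := sub_nonneg.2 hr
  have hr_inv : 0 ≤ 1 / r := one_div_nonneg.2 hr₀.le
  have h_exponent : 1 / r * (r - 1) + 1 / r = 1 := by
    rw [← mul_add_one, sub_add_cancel, one_div_mul_cancel hr₀.ne']
  have hφr : Antitone fun t => φ t ^ (1 / r) := fun s t hst =>
    ENNReal.rpow_le_rpow (hφ hst) hr_inv
  set A := ∫⁻ t in Set.Ioi 0, φ t ^ (1 / r)
  have h_pointwise : ∀ t ∈ Set.Ioi (0 : ℝ),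
      φ t * ENNReal.ofReal (t ^ (r - 1)) ≤ A ^ (r - 1) * φ t ^ (1 / r) := by
    intro t ht
    calc φ t * ENNReal.ofReal (t ^ (r - 1))
        = (ENNReal.ofReal t * φ t ^ (1 / r)) ^ (r - 1) * φ t ^ (1 / r) := by
          rw [ENNReal.mul_rpow_of_nonneg _ _ hr₁, ENNReal.ofReal_rpow_of_nonneg (le_of_lt ht) hr₁,
            mul_assoc, ← ENNReal.rpow_mul,
            ← ENNReal.rpow_add_of_nonneg _ _ (mul_nonneg hr_inv hr₁) hr_inv, h_exponent,
            ENNReal.rpow_one, mul_comm]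
      _ ≤ A ^ (r - 1) * φ t ^ (1 / r) := by
          gcongr
          exact ofReal_mul_le_setLIntegral_Ioi_of_antitone hφr t
  calc ∫⁻ t in Set.Ioi 0, φ t * ENNReal.ofReal (t ^ (r - 1))
      ≤ ∫⁻ t in Set.Ioi 0, A ^ (r - 1) * φ t ^ (1 / r) :=
        setLIntegral_mono' measurableSet_Ioi h_pointwise
    _ = A ^ (r - 1) * A ^ (1 : ℝ) := by
        rw [lintegral_const_mul _ hφr.measurable, ENNReal.rpow_one]
    _ = A ^ r := by rw [← ENNReal.rpow_add_of_nonneg _ _ hr₁ zero_le_one, sub_add_cancel]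

theorem eLpNorm'_le_eLorentzNormOne {f : α → E} {r : ℝ} {μ : Measure α}
    (hf : AEStronglyMeasurable f μ) (hr : 1 ≤ r) :
    eLpNorm' f r μ ≤ eLorentzNormOne f r μ := by
  have hr₀ : 0 < r := by linarith
  have h_rpow : ENNReal.ofReal r ≤ ENNReal.ofReal r ^ r := by
    simpa only [ENNReal.rpow_one] using
      ENNReal.rpow_le_rpow_of_exponent_le (ENNReal.one_le_ofReal.2 hr) hr
  rw [eLpNorm'_eq_lintegral_enorm, one_div, ENNReal.rpow_inv_le_iff hr₀, eLorentzNormOne,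
    ENNReal.mul_rpow_of_nonneg _ _ hr₀.le,
    lintegral_enorm_rpow_eq_lintegral_meas_lt_mul hf hr₀]
  gcongr
  exact setLIntegral_Ioi_mul_rpow_le_of_antitone (antitone_measure_lt _ μ) hr

theorem stmt4_general {p r : ℝ} {ρ : ℝ≥0∞} (hr : 1 ≤ r) (hrp : r < p) (hρ₀ : ρ ≠ 0)
    (hρ₁ : ρ < 1) :
    ∃ C : ℝ≥0∞, 0 < C ∧ C ≠ ⊤ ∧
      ∀ (μ : Measure α) (S : ℕ → Set α), (∀ k, μ (S k) ≤ ρ ^ k) →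
        ∀ f : α → E, AEStronglyMeasurable f μ →
          ∑' k, (ρ ^ k) ^ (1 / p - 1 / r) * eLpNorm' f r (μ.restrict (S k)) ≤
            C * eLorentzNormOne f p μ := by
  have hr₀ : 0 < r := by linarith
  obtain ⟨C, hC₀, hC, h_sum⟩ := exists_tsum_pow_rpow_mul_min_rpow_le hρ₀ hρ₁
    (one_div_pos.2 (hr₀.trans hrp)) (one_div_lt_one_div_of_lt hr₀ hrp)
  refine ⟨C, hC₀, hC, fun μ S hS f hf => ?_⟩
  set φ : ℝ → ℝ≥0∞ := fun t => μ {x | t < ‖f x‖}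
  have hφ : Measurable φ := (antitone_measure_lt _ μ).measurable
  set w : ℕ → ℝ≥0∞ := fun k => (ρ ^ k) ^ (1 / p - 1 / r)
  have h_term (k : ℕ) : eLpNorm' f r (μ.restrict (S k)) ≤
      ENNReal.ofReal r * ∫⁻ t in Set.Ioi 0, min (φ t) (ρ ^ k) ^ (1 / r) := by
    refine (eLpNorm'_le_eLorentzNormOne hf.restrict hr).trans ?_
    unfold eLorentzNormOne
    gcongr with t
    exact le_min (Measure.restrict_apply_le _ _) ((measure_mono (Set.subset_univ _)).trans
      (Measure.restrict_apply_univ (S k) ▸ hS k))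
  calc ∑' k, w k * eLpNorm' f r (μ.restrict (S k))
      ≤ ∑' k, w k * (ENNReal.ofReal r * ∫⁻ t in Set.Ioi 0, min (φ t) (ρ ^ k) ^ (1 / r)) := by
        gcongr with k
        exact h_term k
    _ = ENNReal.ofReal r *
          ∫⁻ t in Set.Ioi 0, ∑' k, w k * min (φ t) (ρ ^ k) ^ (1 / r) := by
        rw [lintegral_tsum fun k => by fun_prop, ← ENNReal.tsum_mul_left]
        refine tsum_congr fun k => ?_
        rw [lintegral_const_mul _ (by fun_prop), mul_left_comm]
    _ ≤ ENNReal.ofReal p * ∫⁻ t in Set.Ioi 0, C * φ t ^ (1 / p) := by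
        gcongr with t
        exact h_sum (φ t)
    _ = C * eLorentzNormOne f p μ := by
        rw [lintegral_const_mul _ (by fun_prop), mul_left_comm, eLorentzNormOne]

lemma ofReal_integral_rpow_le_eLpNorm' {g : α → ℝ} {r : ℝ} {μ : Measure α} (hg : ∀ s, 0 ≤ g s)
    (hr : 0 < r) : ENNReal.ofReal ((∫ s, g s ^ r ∂μ) ^ (1 / r)) ≤ eLpNorm' g r μ := by
  have h_nonneg : 0 ≤ ∫ s, g s ^ r ∂μ := integral_nonneg fun s => Real.rpow_nonneg (hg s) r
  rw [eLpNorm'_eq_lintegral_enorm, ← ENNReal.ofReal_rpow_of_nonneg h_nonneg (by positivity),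
    ← Real.enorm_of_nonneg h_nonneg]
  simp only [← Real.enorm_rpow_of_nonneg (hg _) hr.le]
  gcongr
  exact enorm_integral_le_lintegral_enorm _

end Lorentz

lemma eLorentzNormOne_restrict_Ioo {g : ℝ → ℝ} (hg : ∀ s, 0 ≤ g s) (p : ℝ) :
    eLorentzNormOne g p (volume.restrict (Set.Ioo (-1) 0)) = lorentzNorm1 g p := by
  simp only [eLorentzNormOne, lorentzNorm1, Real.norm_of_nonneg (hg _)]

lemma two_rpow_neg_sq (k : ℕ) : ((2 : ℝ) ^ (-(k : ℝ))) ^ 2 = (4⁻¹ : ℝ) ^ k := by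
  rw [Real.rpow_neg zero_le_two, Real.rpow_natCast, ← inv_pow, pow_right_comm]
  norm_num

lemma ofReal_inv_four_pow (k : ℕ) : ENNReal.ofReal ((4⁻¹ : ℝ) ^ k) = (4⁻¹ : ℝ≥0∞) ^ k := by
  rw [ENNReal.ofReal_pow (by positivity), ENNReal.ofReal_inv_of_pos four_pos, ENNReal.ofReal_ofNat]

lemma ofReal_two_rpow_neg_rpow (k : ℕ) (c : ℝ) :
    ENNReal.ofReal (((2 : ℝ) ^ (-(k : ℝ))) ^ (2 * c)) = ((4⁻¹ : ℝ≥0∞) ^ k) ^ c := by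
  rw [Real.rpow_mul (by positivity), Real.rpow_two, two_rpow_neg_sq,
    ← ENNReal.ofReal_rpow_of_pos (by positivity), ofReal_inv_four_pow]

lemma volume_Ioo_neg_two_rpow_neg_sq (k : ℕ) :
    volume (Set.Ioo (-(((2 : ℝ) ^ (-(k : ℝ))) ^ 2)) 0) = 4⁻¹ ^ k := by
  rw [two_rpow_neg_sq, Real.volume_Ioo, zero_sub, neg_neg, ofReal_inv_four_pow]

lemma Ioo_neg_two_rpow_neg_sq_subset (k : ℕ) :
    Set.Ioo (-(((2 : ℝ) ^ (-(k : ℝ))) ^ 2)) 0 ⊆ Set.Ioo (-1) 0 := by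
  rw [two_rpow_neg_sq]
  exact Set.Ioo_subset_Ioo_left (neg_le_neg (pow_le_one₀ (by norm_num) (by norm_num)))

lemma scaling_exponent_eq {p q : ℝ} (hq : 3 / 2 < q) (hp : p = 2 * q / (2 * q - 3)) (r : ℝ) :
    2 - 2 / r - 3 / q = 2 * (1 / p - 1 / r) := by
  have hq₀ : q ≠ 0 := by linarith
  have hq₃ : 2 * q - 3 ≠ 0 := by linarith
  have h_scaling : 2 / p = 2 - 3 / q := by rw [hp]; field_simp
  linear_combination -h_scaling

/-- Lemma A.5 (scalar form): for `3/2 < q < ∞`, `p = 2q/(2q−3)`, `1 ≤ p* < p`,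
and `g ∈ L^{p,1}(−1,0)` nonnegative,
`Σ_{k} r_k^{2−2/p*−3/q} (∫_{−r_k²}^0 g^{p*})^{1/p*} ≤ C ‖g‖_{L^{p,1}(−1,0)}`. -/
theorem stmt4 (q p pstar : ℝ) (hq : 3 / 2 < q) (hp : p = 2 * q / (2 * q - 3))
    (hp1 : 1 ≤ pstar) (hp2 : pstar < p) :
    ∃ C : ℝ≥0∞, 0 < C ∧ C ≠ ⊤ ∧
      ∀ g : ℝ → ℝ, Measurable g → (∀ s, 0 ≤ g s) →
        (∑' k : ℕ, ENNReal.ofReal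
            (((2 : ℝ) ^ (-(k : ℝ))) ^ (2 - 2 / pstar - 3 / q) *
              (∫ s in Set.Ioo (-(((2 : ℝ) ^ (-(k : ℝ))) ^ 2)) 0, g s ^ pstar) ^ (1 / pstar)))
          ≤ C * lorentzNorm1 g p := by
  obtain ⟨C, hC₀, hC, hsum⟩ := stmt4_general (α := ℝ) (E := ℝ) (ρ := 4⁻¹) hp1 hp2
    (by norm_num) (by norm_num)
  refine ⟨C, hC₀, hC, fun g hg hg₀ => ?_⟩
  set S : ℕ → Set ℝ := fun k => Set.Ioo (-(((2 : ℝ) ^ (-(k : ℝ))) ^ 2)) 0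
  have h_measure (k : ℕ) : volume.restrict (Set.Ioo (-1) 0) (S k) ≤ 4⁻¹ ^ k :=
    (Measure.restrict_apply_le _ _).trans_eq (volume_Ioo_neg_two_rpow_neg_sq k)
  have h_norm := hsum _ S h_measure g hg.aestronglyMeasurable
  rw [eLorentzNormOne_restrict_Ioo hg₀] at h_norm
  refine (ENNReal.tsum_le_tsum fun k => ?_).trans h_norm
  rw [scaling_exponent_eq hq hp, ENNReal.ofReal_mul (by positivity), ofReal_two_rpow_neg_rpow,
    Measure.restrict_restrict_of_subset (Ioo_neg_two_rpow_neg_sq_subset k)]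
  gcongr
  exact ofReal_integral_rpow_le_eLpNorm' hg₀ (by linarith)
end
end

section
/- Let R ≥ 1/2 and r_n = 2^{−n}, and suppose u ∈ L^∞(−r_n², 0; L²(U_n(R))) ∩ L²(−r_n², 0; W^{1,2}(U_n(R))), where U_n(R) = B'(R) × (−r_n, r_n). Then for 2 ≤ p ≤ ∞, 2 ≤ q_h, q_v < ∞ with 2/p + 2/q_h + 1/q_v = 3/2, one has ‖u‖_{L^p(−r_n², 0; L^{q_v}_v L^{q_h}_h(U_n(R)))}² ≤ C E_n(R), where E_n(R) = sup_{t∈(−r_n²,0)} ∫_{U_n(R)} |u(t)|² dx + ∫_{−r_n²}^{0} ∫_{U_n(R)} |∇u|² dx ds and C is independent of n. -/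
open MeasureTheory Metric ENNReal

noncomputable section

/-- The real-valued anisotropic norm `‖u‖_{L^{q_v}_v L^{q_h}_h(B'(R)×(−r,r))}`
for finite exponents. -/
def aniNormR (u : EuclideanSpace ℝ (Fin 2) × ℝ → ℝ) (R r qv qh : ℝ) : ℝ :=
  (∫ x3 in Set.Ioo (-r) r,
      (∫ x' in ball (0 : EuclideanSpace ℝ (Fin 2)) R, |u (x', x3)| ^ qh) ^ (qv / qh)) ^ (1 / qv)

/-- The cylinder `U_n(R) = B'(R) × (−r_n, r_n)`. -/
def cylSet (R r : ℝ) : Set (EuclideanSpace ℝ (Fin 2) × ℝ) :=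
  (ball (0 : EuclideanSpace ℝ (Fin 2)) R) ×ˢ Set.Ioo (-r) r

/-- The localized energy
`E_n(R) = sup_{t∈(−r_n²,0)} ∫_{U_n(R)} |u(t)|² dx + ∫_{−r_n²}^0 ∫_{U_n(R)} |∇u|² dx ds`. -/
def energy (u : ℝ → EuclideanSpace ℝ (Fin 2) × ℝ → ℝ) (R rn : ℝ) : ℝ≥0∞ :=
  (⨆ t ∈ Set.Ioo (-rn ^ 2) (0 : ℝ),
      ∫⁻ x in cylSet R rn, ENNReal.ofReal (|u t x| ^ 2)) +
    ∫⁻ s in Set.Ioo (-rn ^ 2) (0 : ℝ),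
      ∫⁻ x in cylSet R rn, ENNReal.ofReal (‖fderiv ℝ (u s) x‖ ^ 2)

/-!
On an interval of length at least `ℓ`, the one-dimensional Sobolev inequality bounds `‖g‖ ^ s` at
every point by the integral of `‖g‖ ^ (s - 1) * (ℓ⁻¹ * ‖g‖ + s * ‖∇g‖)`. In the disk it is applied
along chords: up to one fixed rotation, every point has two perpendicular chords of length
comparable to the radius, and multiplying the two bounds and integrating controls `∫ ‖g‖ ^ (2 * s)`.
By Cauchy–Schwarz this gains two powers of integrability for one power of the `H¹` density, and
iteration and interpolation give the Gagliardo–Nirenberg inequality in the disk.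

Along vertical lines the same inequality bounds the slice integrals `∫ ‖f (x, z)‖ ^ m dx`,
`2 ≤ m ≤ 4`, uniformly in `z`. Together with Gagliardo–Nirenberg on each slice this bounds
`∫ (∫ ‖f‖ ^ qh dx) ^ (qv / qh) dz` by powers of the `L²` and `H¹` norms on the cylinder whose
exponents are those dictated by scaling. It remains to integrate in time.
-/

local notation "ℝ²" => EuclideanSpace ℝ (Fin 2)

lemma rpow_sub_one_mul_self (a : ℝ≥0∞) {s : ℝ} (hs : 1 ≤ s) : a ^ (s - 1) * a = a ^ s := by
  conv_lhs => enter [2]; rw [← ENNReal.rpow_one a]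
  rw [← ENNReal.rpow_add_of_nonneg _ _ (by linarith) zero_le_one, sub_add_cancel]

section OneDimensional

variable {F : Type*} [NormedAddCommGroup F]

lemma enorm_sub_le_setLIntegral_deriv [NormedSpace ℝ F] {ψ : ℝ → F} (hψ : ContDiff ℝ 1 ψ)
    {I : Set ℝ} [hI : I.OrdConnected] {a b : ℝ} (ha : a ∈ I) (hb : b ∈ I) :
    ‖ψ a - ψ b‖ₑ ≤ ∫⁻ t in I, ‖deriv ψ t‖ₑ := by
  wlog hab : b ≤ a generalizing a b
  · rw [← enorm_neg, neg_sub]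
    exact this hb ha (le_of_not_ge hab)
  · exact (enorm_sub_le_lintegral_deriv_of_contDiffOn_Icc hψ.contDiffOn hab).trans
      (lintegral_mono_set (hI.out hb ha))

/- Average `‖ψ t₀‖ ≤ ‖ψ y‖ + ∫ ‖ψ'‖` over `y ∈ I`. -/
lemma enorm_le_average_add_setLIntegral_deriv [NormedSpace ℝ F] {ψ : ℝ → F}
    (hψ : ContDiff ℝ 1 ψ) {I : Set ℝ} [hI : I.OrdConnected] {ℓ : ℝ} (hℓ : 0 < ℓ)
    (hIℓ : ENNReal.ofReal ℓ ≤ volume I) {t₀ : ℝ} (ht₀ : t₀ ∈ I) :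
    ‖ψ t₀‖ₑ ≤ (ENNReal.ofReal ℓ)⁻¹ * (∫⁻ t in I, ‖ψ t‖ₑ) + ∫⁻ t in I, ‖deriv ψ t‖ₑ := by
  set T := ∫⁻ t in I, ‖deriv ψ t‖ₑ
  have pointwise : ∀ y ∈ I, ‖ψ t₀‖ₑ - T ≤ ‖ψ y‖ₑ := fun y hy => by
    rw [tsub_le_iff_right]
    calc ‖ψ t₀‖ₑ = ‖ψ y + (ψ t₀ - ψ y)‖ₑ := by rw [add_sub_cancel]
      _ ≤ ‖ψ y‖ₑ + T := (enorm_add_le _ _).trans <|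
        add_le_add_right (enorm_sub_le_setLIntegral_deriv hψ ht₀ hy) _
  have averaged : ENNReal.ofReal ℓ * (‖ψ t₀‖ₑ - T) ≤ ∫⁻ t in I, ‖ψ t‖ₑ := by
    calc ENNReal.ofReal ℓ * (‖ψ t₀‖ₑ - T) ≤ volume I * (‖ψ t₀‖ₑ - T) := by gcongr
      _ = ∫⁻ _ in I, (‖ψ t₀‖ₑ - T) := by rw [setLIntegral_const, mul_comm]
      _ ≤ ∫⁻ t in I, ‖ψ t‖ₑ := setLIntegral_mono' hI.measurableSet pointwise
  rw [← tsub_le_iff_right]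
  exact (ENNReal.mul_le_iff_le_inv (by simpa using hℓ) ofReal_ne_top).1 averaged

end OneDimensional

section Densities

variable {E F : Type*} [NormedAddCommGroup E] [NormedSpace ℝ E]
  [NormedAddCommGroup F] [InnerProductSpace ℝ F]

/-- The density `‖g‖^(s-1) (ℓ⁻¹ ‖g‖ + s ‖∇g‖)`: the zeroth-order term of the one-dimensional
Sobolev inequality on an interval of length `ℓ`, plus a bound for `|∇ ‖g‖^s|`. -/
def rpowDensity (ℓ s : ℝ) (g : E → F) (x : E) : ℝ≥0∞ :=
  ‖g x‖ₑ ^ (s - 1) * ((ENNReal.ofReal ℓ)⁻¹ * ‖g x‖ₑ + ENNReal.ofReal s * ‖fderiv ℝ g x‖ₑ)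

/-- The density `‖∇g‖² + r⁻² ‖g‖²` of the `H¹` norm that scales like `‖∇g‖²` when lengths are
measured in units of `r`. -/
def h1Density (r : ℝ) (g : E → F) (x : E) : ℝ≥0∞ :=
  ‖fderiv ℝ g x‖ₑ ^ 2 + (ENNReal.ofReal r)⁻¹ ^ 2 * ‖g x‖ₑ ^ 2

section Measurability

variable [MeasurableSpace E] [OpensMeasurableSpace E] {g : E → F}

lemma measurable_enorm_of_contDiff (hg : ContDiff ℝ 1 g) : Measurable fun x => ‖g x‖ₑ :=
  hg.continuous.enorm.measurable

lemma measurable_enorm_fderiv_of_contDiff (hg : ContDiff ℝ 1 g) :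
    Measurable fun x => ‖fderiv ℝ g x‖ₑ :=
  (hg.continuous_fderiv (by simp)).enorm.measurable

lemma measurable_rpowDensity (hg : ContDiff ℝ 1 g) (ℓ s : ℝ) : Measurable (rpowDensity ℓ s g) := by
  have := measurable_enorm_of_contDiff hg
  have := measurable_enorm_fderiv_of_contDiff hg
  unfold rpowDensity
  fun_prop

lemma measurable_h1Density (hg : ContDiff ℝ 1 g) (r : ℝ) : Measurable (h1Density r g) := by
  have := measurable_enorm_of_contDiff hg
  have := measurable_enorm_fderiv_of_contDiff hg
  unfold h1Density
  fun_prop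

end Measurability

lemma enorm_deriv_norm_rpow_comp_le {g : E → F} (hg : ContDiff ℝ 1 g) {s : ℝ} (hs : 1 < s)
    {γ : ℝ → E} {v : E} (hv : ‖v‖ ≤ 1) {t : ℝ} (hγ : HasDerivAt γ v t) :
    ‖deriv (fun t => ‖g (γ t)‖ ^ s) t‖ₑ ≤
      ‖g (γ t)‖ₑ ^ (s - 1) * (ENNReal.ofReal s * ‖fderiv ℝ g (γ t)‖ₑ) := by
  lift s to NNReal using by linarith
  have hgs : ContDiff ℝ 1 fun x => ‖g x‖ ^ (s : ℝ) := hg.norm_rpow hs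
  have hcomp := (hgs.differentiable one_ne_zero (γ t)).hasFDerivAt.comp_hasDerivAt t hγ
  have hv' : ‖v‖ₑ ≤ 1 := by simpa [← ofReal_norm] using hv
  calc ‖deriv (fun t => ‖g (γ t)‖ ^ (s : ℝ)) t‖ₑ
      = ‖fderiv ℝ (fun x => ‖g x‖ ^ (s : ℝ)) (γ t) v‖ₑ := congrArg (‖·‖ₑ) hcomp.deriv
    _ ≤ ‖fderiv ℝ (fun x => ‖g x‖ ^ (s : ℝ)) (γ t)‖ₑ * ‖v‖ₑ := ContinuousLinearMap.le_opENorm _ _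
    _ ≤ ‖fderiv ℝ (fun x => ‖g x‖ ^ (s : ℝ)) (γ t)‖ₑ := mul_le_of_le_one_right' hv'
    _ ≤ s * ‖g (γ t)‖ₑ ^ ((s : ℝ) - 1) * ‖fderiv ℝ g (γ t)‖ₑ :=
        enorm_fderiv_norm_rpow_le (hg.differentiable one_ne_zero) (by exact_mod_cast hs)
    _ = _ := by rw [ENNReal.ofReal_coe_nnreal, mul_comm (s : ℝ≥0∞), mul_assoc]

lemma enorm_rpow_le_setLIntegral_rpowDensity {g : E → F} (hg : ContDiff ℝ 1 g) {s : ℝ}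
    (hs : 1 < s) (a : E) {v : E} (hv : ‖v‖ ≤ 1) {I : Set ℝ} [hI : I.OrdConnected] {ℓ : ℝ}
    (hℓ : 0 < ℓ) (hIℓ : ENNReal.ofReal ℓ ≤ volume I) {t₀ : ℝ} (ht₀ : t₀ ∈ I) :
    ‖g (a + t₀ • v)‖ₑ ^ s ≤ ∫⁻ t in I, rpowDensity ℓ s g (a + t • v) := by
  have hγ : ∀ t : ℝ, HasDerivAt (fun t => a + t • v) v t := fun t => by
    simpa using ((hasDerivAt_id t).smul_const v).const_add a
  have hgγ : ContDiff ℝ 1 fun t : ℝ => g (a + t • v) := hg.comp (by fun_prop)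
  have henorm : ∀ t : ℝ, ‖‖g (a + t • v)‖ ^ s‖ₑ = ‖g (a + t • v)‖ₑ ^ s := fun t => by
    rw [Real.enorm_rpow_of_nonneg (norm_nonneg _) (by linarith), enorm_norm]
  have hm : Measurable fun t : ℝ => ‖g (a + t • v)‖ₑ ^ s :=
    (measurable_enorm_of_contDiff hgγ).pow_const s
  have h := enorm_le_average_add_setLIntegral_deriv (hgγ.norm_rpow hs) hℓ hIℓ ht₀
  simp only [henorm] at h
  rw [← lintegral_const_mul _ hm, ← lintegral_add_left (hm.const_mul _)] at h
  refine h.trans (lintegral_mono fun t => ?_)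
  rw [rpowDensity, mul_add, mul_left_comm, rpow_sub_one_mul_self _ hs.le]
  gcongr
  exact enorm_deriv_norm_rpow_comp_le hg hs hv (hγ t)

lemma enorm_rpow_le_lintegral_indicator_rpowDensity {g : E → F} (hg : ContDiff ℝ 1 g) {s : ℝ}
    (hs : 1 < s) {U : Set E} (hU : Convex ℝ U) {a v : E} (hv : ‖v‖ ≤ 1) {ℓ : ℝ} (hℓ : 0 < ℓ)
    (hUℓ : ENNReal.ofReal ℓ ≤ volume {t : ℝ | a + t • v ∈ U}) {t₀ : ℝ} (ht₀ : a + t₀ • v ∈ U) :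
    ‖g (a + t₀ • v)‖ₑ ^ s ≤ ∫⁻ t : ℝ, U.indicator (rpowDensity ℓ s g) (a + t • v) := by
  have hI : {t : ℝ | a + t • v ∈ U}.OrdConnected :=
    ((hU.translate_preimage_right a).linear_preimage
      (LinearMap.toSpanSingleton ℝ E v)).ordConnected
  refine (enorm_rpow_le_setLIntegral_rpowDensity hg hs a hv hℓ hUℓ ht₀).trans_eq ?_
  rw [← lintegral_indicator hI.measurableSet]
  rfl

end Densities

section CauchySchwarz

lemma add_sq_le_two_mul_add_sq (a b : ℝ≥0∞) : (a + b) ^ 2 ≤ 2 * (a ^ 2 + b ^ 2) := by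
  have h := ENNReal.rpow_add_le_mul_rpow_add_rpow a b (p := 2) (by norm_num)
  norm_num at h
  exact_mod_cast h

lemma le_rpow_half_iff {a b : ℝ≥0∞} : a ≤ b ^ (1 / 2 : ℝ) ↔ a ^ 2 ≤ b := by
  rw [one_div, ENNReal.le_rpow_inv_iff two_pos, ENNReal.rpow_two]

variable {α : Type*} [MeasurableSpace α] {μ : Measure α}

lemma sq_lintegral_mul_le {a b : α → ℝ≥0∞} (ha : AEMeasurable a μ) (hb : AEMeasurable b μ) :
    (∫⁻ x, a x * b x ∂μ) ^ 2 ≤ (∫⁻ x, a x ^ 2 ∂μ) * ∫⁻ x, b x ^ 2 ∂μ := by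
  have h := ENNReal.lintegral_mul_le_Lp_mul_Lq μ Real.HolderConjugate.two_two ha hb
  simp only [Pi.mul_apply, ENNReal.rpow_two] at h
  rwa [← ENNReal.mul_rpow_of_nonneg _ _ (by norm_num), le_rpow_half_iff] at h

lemma lintegral_rpow_le_mul_rpow {w : α → ℝ≥0∞} (hw : AEMeasurable w μ) {a b q τ : ℝ}
    (ha : 0 ≤ a) (hb : 0 ≤ b) (hτ₀ : 0 ≤ τ) (hτ₁ : τ ≤ 1) (hq : q = (1 - τ) * a + τ * b) :
    ∫⁻ x, w x ^ q ∂μ ≤ (∫⁻ x, w x ^ a ∂μ) ^ (1 - τ) * (∫⁻ x, w x ^ b ∂μ) ^ τ := by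
  refine le_trans (lintegral_mono fun x => le_of_eq ?_)
    (ENNReal.lintegral_mul_norm_pow_le (hw.pow_const a) (hw.pow_const b) (sub_nonneg.2 hτ₁) hτ₀
      (sub_add_cancel 1 τ))
  rw [← ENNReal.rpow_mul, ← ENNReal.rpow_mul, ← ENNReal.rpow_add_of_nonneg _ _
    (mul_nonneg ha (sub_nonneg.2 hτ₁)) (mul_nonneg hb hτ₀), hq, mul_comm a, mul_comm b]

variable {E F : Type*} [NormedAddCommGroup E] [NormedSpace ℝ E] [MeasurableSpace E]
  [OpensMeasurableSpace E] [NormedAddCommGroup F] [InnerProductSpace ℝ F]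

lemma sq_lintegral_rpowDensity_le {g : E → F} (hg : ContDiff ℝ 1 g) {s : ℝ} (hs : 1 ≤ s) (ℓ : ℝ)
    (μ : Measure E) :
    (∫⁻ x, rpowDensity ℓ s g x ∂μ) ^ 2 ≤ 2 * ENNReal.ofReal s ^ 2 *
      (∫⁻ x, ‖g x‖ₑ ^ (2 * s - 2) ∂μ) * ∫⁻ x, h1Density ℓ g x ∂μ := by
  have hgm := measurable_enorm_of_contDiff hg
  have hdm := measurable_enorm_fderiv_of_contDiff hg
  have hs' : 1 ≤ ENNReal.ofReal s ^ 2 := one_le_pow₀ (by simpa using hs)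
  have hleft : ∀ x, (‖g x‖ₑ ^ (s - 1)) ^ 2 = ‖g x‖ₑ ^ (2 * s - 2) := fun x => by
    rw [← ENNReal.rpow_two, ← ENNReal.rpow_mul]
    congr 1
    ring
  have hright : ∀ x, ((ENNReal.ofReal ℓ)⁻¹ * ‖g x‖ₑ + ENNReal.ofReal s * ‖fderiv ℝ g x‖ₑ) ^ 2 ≤
      2 * ENNReal.ofReal s ^ 2 * h1Density ℓ g x := fun x => by
    refine (add_sq_le_two_mul_add_sq _ _).trans ?_
    rw [h1Density, mul_assoc, mul_pow, mul_pow, add_comm, mul_add (ENNReal.ofReal s ^ 2)]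
    exact mul_le_mul_right (add_le_add_right (le_mul_of_one_le_left' hs') _) 2
  calc (∫⁻ x, rpowDensity ℓ s g x ∂μ) ^ 2
      ≤ (∫⁻ x, (‖g x‖ₑ ^ (s - 1)) ^ 2 ∂μ) *
          ∫⁻ x, ((ENNReal.ofReal ℓ)⁻¹ * ‖g x‖ₑ + ENNReal.ofReal s * ‖fderiv ℝ g x‖ₑ) ^ 2 ∂μ :=
        sq_lintegral_mul_le (hgm.pow_const _).aemeasurable (by fun_prop)
    _ ≤ (∫⁻ x, ‖g x‖ₑ ^ (2 * s - 2) ∂μ) * ∫⁻ x, 2 * ENNReal.ofReal s ^ 2 * h1Density ℓ g x ∂μ := by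
        simp only [hleft]
        gcongr with x
        exact hright x
    _ = _ := by
        rw [lintegral_const_mul _ (measurable_h1Density hg ℓ), ← mul_assoc, mul_comm (∫⁻ _, _ ∂μ)]

end CauchySchwarz

section Plane

lemma setLIntegral_sq_le_sq_lintegral_of_le_lintegral_slices {α β : Type*} [MeasurableSpace α]
    [MeasurableSpace β] {μ : Measure α} {ν : Measure β} [SFinite μ] [SFinite ν]
    {w P : α × β → ℝ≥0∞} (hP : Measurable P) {V : Set (α × β)} (hV : MeasurableSet V)
    (hfst : ∀ z ∈ V, w z ≤ ∫⁻ x, P (x, z.2) ∂μ) (hsnd : ∀ z ∈ V, w z ≤ ∫⁻ y, P (z.1, y) ∂ν) :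
    ∫⁻ z in V, w z ^ 2 ∂(μ.prod ν) ≤ (∫⁻ z, P z ∂(μ.prod ν)) ^ 2 := by
  calc ∫⁻ z in V, w z ^ 2 ∂(μ.prod ν)
      ≤ ∫⁻ z in V, (∫⁻ y, P (z.1, y) ∂ν) * ∫⁻ x, P (x, z.2) ∂μ ∂(μ.prod ν) :=
        setLIntegral_mono' hV fun z hz => by
          rw [sq]
          exact mul_le_mul' (hsnd z hz) (hfst z hz)
    _ ≤ ∫⁻ z, (∫⁻ y, P (z.1, y) ∂ν) * ∫⁻ x, P (x, z.2) ∂μ ∂(μ.prod ν) :=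
        setLIntegral_le_lintegral _ _
    _ = (∫⁻ x, ∫⁻ y, P (x, y) ∂ν ∂μ) * ∫⁻ y, ∫⁻ x, P (x, y) ∂μ ∂ν :=
        lintegral_prod_mul hP.lintegral_prod_right'.aemeasurable
          hP.lintegral_prod_left'.aemeasurable
    _ = (∫⁻ z, P z ∂(μ.prod ν)) ^ 2 := by
        rw [sq, ← lintegral_prod _ hP.aemeasurable, ← lintegral_prod_symm _ hP.aemeasurable]

variable {F : Type*} [NormedAddCommGroup F] [InnerProductSpace ℝ F]

/- Bound `‖g z‖ ^ s` by the integral of `rpowDensity` over the horizontal chord through `z` and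
over the vertical one, and multiply the two bounds. -/
lemma setLIntegral_enorm_rpow_le_sq_setLIntegral_rpowDensity {g : ℂ → F} (hg : ContDiff ℝ 1 g)
    {s : ℝ} (hs : 1 < s) {ℓ : ℝ} (hℓ : 0 < ℓ) {U V : Set ℂ} (hU : Convex ℝ U)
    (hUm : MeasurableSet U) (hVm : MeasurableSet V) (hVU : V ⊆ U)
    (hre : ∀ z ∈ V, ENNReal.ofReal ℓ ≤ volume {t : ℝ | z.im • Complex.I + t • (1 : ℂ) ∈ U})
    (him : ∀ z ∈ V, ENNReal.ofReal ℓ ≤ volume {t : ℝ | z.re • (1 : ℂ) + t • Complex.I ∈ U}) :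
    ∫⁻ z in V, ‖g z‖ₑ ^ (2 * s) ≤ (∫⁻ z in U, rpowDensity ℓ s g z) ^ 2 := by
  let e := Complex.measurableEquivRealProd.symm
  have he : MeasurePreserving e := Complex.volume_preserving_equiv_real_prod.symm
  have he_fst : ∀ x y : ℝ, e (x, y) = y • Complex.I + x • (1 : ℂ) := fun x y => by
    apply Complex.ext <;> simp [e, Complex.measurableEquivRealProd]
  have he_snd : ∀ x y : ℝ, e (x, y) = x • (1 : ℂ) + y • Complex.I := fun x y => by
    rw [he_fst, add_comm]
  have hDm : Measurable (U.indicator (rpowDensity ℓ s g)) :=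
    (measurable_rpowDensity hg ℓ s).indicator hUm
  have hLW := setLIntegral_sq_le_sq_lintegral_of_le_lintegral_slices (μ := volume) (ν := volume)
    (w := fun z => ‖g (e z)‖ₑ ^ s) (hDm.comp e.measurable) (e.measurable hVm)
    (fun z hz => ?_) (fun z hz => ?_)
  · rw [← Measure.volume_eq_prod, he.setLIntegral_comp_preimage_emb e.measurableEmbedding
      (fun z => (‖g z‖ₑ ^ s) ^ 2)] at hLW
    simp only [Function.comp_apply, he.lintegral_comp_emb e.measurableEmbedding
      (U.indicator (rpowDensity ℓ s g)), lintegral_indicator hUm] at hLW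
    simpa only [mul_comm (2 : ℝ), ENNReal.rpow_mul, ENNReal.rpow_two] using hLW
  · obtain ⟨x, y⟩ := z
    have hz' : y • Complex.I + x • (1 : ℂ) ∈ U := he_fst x y ▸ hVU hz
    simp only [Function.comp_apply, he_fst]
    exact enorm_rpow_le_lintegral_indicator_rpowDensity hg hs hU (by simp) hℓ
      (by simpa [e, Complex.measurableEquivRealProd] using hre _ hz) hz'
  · obtain ⟨x, y⟩ := z
    have hz' : x • (1 : ℂ) + y • Complex.I ∈ U := he_snd x y ▸ hVU hz
    simp only [Function.comp_apply, he_snd]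
    exact enorm_rpow_le_lintegral_indicator_rpowDensity hg hs hU (by simp) hℓ
      (by simpa [e, Complex.measurableEquivRealProd] using him _ hz) hz'

lemma ofReal_half_le_volume_chord {E : Type*} [NormedAddCommGroup E] [InnerProductSpace ℝ E]
    {e v : E} (he : ‖e‖ = 1) (hv : ‖v‖ = 1) (hev : inner ℝ e v = 0) {R y : ℝ} (hR : 0 < R)
    (hy : 16 * y ^ 2 ≤ 15 * R ^ 2) :
    ENNReal.ofReal (R / 2) ≤ volume {t : ℝ | y • e + t • v ∈ ball (0 : E) R} := by
  have hsub : Set.Ioo (-(R / 4)) (R / 4) ⊆ {t : ℝ | y • e + t • v ∈ ball (0 : E) R} := by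
    intro t ht
    have hnorm : ‖y • e + t • v‖ ^ 2 = y ^ 2 + t ^ 2 := by
      have h := norm_add_sq_eq_norm_sq_add_norm_sq_real
        (show inner ℝ (y • e) (t • v) = 0 by simp [inner_smul_left, inner_smul_right, hev])
      simpa [norm_smul, he, hv, ← sq] using h
    have ht' : t ^ 2 < (R / 4) ^ 2 := sq_lt_sq' ht.1 ht.2
    rw [Set.mem_ofPred_eq, mem_ball_zero_iff, ← sq_lt_sq₀ (norm_nonneg _) hR.le, hnorm]
    linarith
  calc ENNReal.ofReal (R / 2) = volume (Set.Ioo (-(R / 4)) (R / 4)) := by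
        rw [Real.volume_Ioo]
        congr 1
        ring
    _ ≤ _ := measure_mono hsub

/-- The points of the open disk of radius `R` both of whose coordinates are at most `√15 / 4 * R`
in absolute value, so that both coordinate chords through them have length at least `R / 2`. -/
def diskCore (R : ℝ) : Set ℂ :=
  {z | z ∈ ball 0 R ∧ 16 * z.re ^ 2 ≤ 15 * R ^ 2 ∧ 16 * z.im ^ 2 ≤ 15 * R ^ 2}

lemma measurableSet_diskCore (R : ℝ) : MeasurableSet (diskCore R) :=
  measurableSet_ball.inter <|
    (measurableSet_le ((Complex.measurable_re.pow_const 2).const_mul 16) measurable_const).inter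
      (measurableSet_le ((Complex.measurable_im.pow_const 2).const_mul 16) measurable_const)

lemma setLIntegral_diskCore_le {g : ℂ → F} (hg : ContDiff ℝ 1 g) {s : ℝ} (hs : 1 < s) {R : ℝ}
    (hR : 0 < R) :
    ∫⁻ z in diskCore R, ‖g z‖ₑ ^ (2 * s) ≤ (∫⁻ z in ball 0 R, rpowDensity (R / 2) s g z) ^ 2 :=
  setLIntegral_enorm_rpow_le_sq_setLIntegral_rpowDensity hg hs (half_pos hR) (convex_ball 0 R)
    measurableSet_ball (measurableSet_diskCore R) (fun _ hz => hz.1)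
    (fun _ hz => ofReal_half_le_volume_chord (by simp) (by simp) (by simp) hR hz.2.2)
    (fun _ hz => ofReal_half_le_volume_chord (by simp) (by simp) (by simp) hR hz.2.1)

/-- The rotation of the plane with matrix `!![3/5, -4/5; 4/5, 3/5]`, which together with the
identity covers the disk by two copies of its core. -/
def pythagoreanRotation : ℂ ≃ₗᵢ[ℝ] ℂ :=
  rotation ⟨⟨3 / 5, 4 / 5⟩, by
    change _ ∈ sphere (0 : ℂ) 1
    rw [mem_sphere_zero_iff_norm, Complex.norm_def, Complex.normSq_mk]
    norm_num⟩

lemma pythagoreanRotation_apply (z : ℂ) :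
    pythagoreanRotation z = ⟨(3 * z.re - 4 * z.im) / 5, (4 * z.re + 3 * z.im) / 5⟩ := by
  have hmul : pythagoreanRotation z = ⟨3 / 5, 4 / 5⟩ * z := rotation_apply _ z
  rw [hmul]
  apply Complex.ext
  · rw [Complex.mul_re]
    ring
  · rw [Complex.mul_im]
    ring

/- A point with `|re| > √15 / 4 * R` has `|im| < R / 4`, and vice versa, so that rotating it by
about 53° brings it into the core. -/
lemma ball_subset_diskCore_union_preimage {R : ℝ} :
    ball (0 : ℂ) R ⊆ diskCore R ∪ pythagoreanRotation ⁻¹' diskCore R := by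
  intro z hz
  have hz' : pythagoreanRotation z ∈ ball 0 R := by
    simpa only [mem_ball_zero_iff, LinearIsometryEquiv.norm_map] using hz
  have hsq : z.re ^ 2 + z.im ^ 2 < R ^ 2 := by
    rw [mem_ball_zero_iff] at hz
    have := pow_lt_pow_left₀ hz (norm_nonneg z) two_ne_zero
    rwa [Complex.sq_norm, Complex.normSq_apply, ← sq, ← sq] at this
  by_cases hcore : 16 * z.re ^ 2 ≤ 15 * R ^ 2 ∧ 16 * z.im ^ 2 ≤ 15 * R ^ 2
  · exact Or.inl ⟨hz, hcore⟩
  · refine Or.inr ⟨hz', ?_⟩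
    rw [not_and_or, not_le, not_le] at hcore
    rw [pythagoreanRotation_apply]
    rcases hcore with h | h <;> constructor <;>
      nlinarith [sq_nonneg (z.re - 4 * z.im), sq_nonneg (z.re + 4 * z.im),
        sq_nonneg (4 * z.re - z.im), sq_nonneg (4 * z.re + z.im)]

section Isometry

variable {E E' : Type*} [NormedAddCommGroup E] [NormedSpace ℝ E] [NormedAddCommGroup E']
  [NormedSpace ℝ E']

lemma enorm_fderiv_comp_linearIsometryEquiv (L : E ≃ₗᵢ[ℝ] E') (g : E' → F) (x : E) :
    ‖fderiv ℝ (g ∘ L) x‖ₑ = ‖fderiv ℝ g (L x)‖ₑ := by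
  rw [← ofReal_norm, ← ofReal_norm]
  congr 1
  have h : fderiv ℝ (g ∘ L) x = (fderiv ℝ g (L x)).comp (L : E →L[ℝ] E') :=
    L.toContinuousLinearEquiv.comp_right_fderiv
  rw [h]
  exact ContinuousLinearMap.opNorm_comp_linearIsometryEquiv _ L

lemma rpowDensity_comp_linearIsometryEquiv (L : E ≃ₗᵢ[ℝ] E') (ℓ s : ℝ) (g : E' → F) (x : E) :
    rpowDensity ℓ s (g ∘ L) x = rpowDensity ℓ s g (L x) := by
  simp only [rpowDensity, enorm_fderiv_comp_linearIsometryEquiv, Function.comp_apply]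

end Isometry

lemma setLIntegral_preimage_diskCore_le {g : ℝ² → F} (hg : ContDiff ℝ 1 g) {s : ℝ} (hs : 1 < s)
    {R : ℝ} (hR : 0 < R) (L : ℂ ≃ₗᵢ[ℝ] ℝ²) :
    ∫⁻ x in L.symm ⁻¹' diskCore R, ‖g x‖ₑ ^ (2 * s) ≤
      (∫⁻ x in ball 0 R, rpowDensity (R / 2) s g x) ^ 2 := by
  have hL : MeasurePreserving L := L.measurePreserving
  have hLe : MeasurableEmbedding L := L.toMeasurableEquiv.measurableEmbedding
  have hcore : L ⁻¹' (L.symm ⁻¹' diskCore R) = diskCore R := by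
    rw [← Set.preimage_comp]
    simp
  have hball : L ⁻¹' ball 0 R = ball 0 R := by simp
  rw [← hL.setLIntegral_comp_preimage_emb hLe, ← hL.setLIntegral_comp_preimage_emb hLe, hcore,
    hball]
  simpa only [rpowDensity_comp_linearIsometryEquiv, Function.comp_apply] using
    setLIntegral_diskCore_le (hg.comp L.contDiff) hs hR

lemma setLIntegral_ball_enorm_rpow_le_sq_setLIntegral_rpowDensity {g : ℝ² → F}
    (hg : ContDiff ℝ 1 g) {s : ℝ} (hs : 1 < s) {R : ℝ} (hR : 0 < R) :
    ∫⁻ x in ball 0 R, ‖g x‖ₑ ^ (2 * s) ≤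
      2 * (∫⁻ x in ball 0 R, rpowDensity (R / 2) s g x) ^ 2 := by
  let L : ℂ ≃ₗᵢ[ℝ] ℝ² := Complex.orthonormalBasisOneI.repr
  let L' : ℂ ≃ₗᵢ[ℝ] ℝ² := pythagoreanRotation.symm.trans L
  have hcover : ball (0 : ℝ²) R ⊆ L.symm ⁻¹' diskCore R ∪ L'.symm ⁻¹' diskCore R := fun x hx =>
    @ball_subset_diskCore_union_preimage R (L.symm x) (by simpa using hx)
  rw [two_mul (_ ^ 2)]
  exact (lintegral_mono_set hcover).trans <| (lintegral_union_le _ _ _).trans <|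
    add_le_add (setLIntegral_preimage_diskCore_le hg hs hR L)
      (setLIntegral_preimage_diskCore_le hg hs hR L')

lemma h1Density_le_mul_h1Density {E : Type*} [NormedAddCommGroup E] [NormedSpace ℝ E]
    {c ℓ r : ℝ} (hc : 1 ≤ c) (hr : 0 < r) (hrℓ : r ≤ c * ℓ) (g : E → F) (x : E) :
    h1Density ℓ g x ≤ ENNReal.ofReal c ^ 2 * h1Density r g x := by
  have hℓ : 0 < ℓ := pos_of_mul_pos_right (hr.trans_le hrℓ) (by linarith)
  have hinv : (ENNReal.ofReal ℓ)⁻¹ ≤ ENNReal.ofReal c * (ENNReal.ofReal r)⁻¹ := by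
    rw [← ENNReal.ofReal_inv_of_pos hℓ, ← ENNReal.ofReal_inv_of_pos hr,
      ← ENNReal.ofReal_mul (by linarith)]
    refine ENNReal.ofReal_le_ofReal ?_
    rwa [← div_eq_mul_inv, le_div_iff₀ hr, inv_mul_le_iff₀ hℓ, mul_comm]
  rw [h1Density, h1Density, mul_add, ← mul_assoc,
    ← mul_pow (ENNReal.ofReal c) (ENNReal.ofReal r)⁻¹]
  gcongr
  exact le_mul_of_one_le_left' (one_le_pow₀ (by simpa using hc))

lemma setLIntegral_ball_enorm_rpow_add_two_le {R r : ℝ} (hr : 0 < r) (hrR : r ≤ 2 * R)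
    {g : ℝ² → F} (hg : ContDiff ℝ 1 g) {m : ℝ} (hm : 0 < m) :
    ∫⁻ x in ball 0 R, ‖g x‖ₑ ^ (m + 2) ≤ ENNReal.ofReal (4 * (m + 2)) ^ 2 *
      (∫⁻ x in ball 0 R, ‖g x‖ₑ ^ m) * ∫⁻ x in ball 0 R, h1Density r g x := by
  have hsq := sq_lintegral_rpowDensity_le hg (s := (m + 2) / 2) (by linarith) (R / 2)
    (volume.restrict (ball 0 R))
  have hball := setLIntegral_ball_enorm_rpow_le_sq_setLIntegral_rpowDensity hg
    (s := (m + 2) / 2) (by linarith) (R := R) (by linarith)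
  have hdensity : ∫⁻ x in ball 0 R, h1Density (R / 2) g x ≤
      ENNReal.ofReal 4 ^ 2 * ∫⁻ x in ball 0 R, h1Density r g x := by
    rw [← lintegral_const_mul _ (measurable_h1Density hg r)]
    exact lintegral_mono fun x =>
      h1Density_le_mul_h1Density (by norm_num) hr (by linarith) g x
  have hconst : ENNReal.ofReal (4 * (m + 2)) ^ 2 =
      2 * (2 * ENNReal.ofReal ((m + 2) / 2) ^ 2) * ENNReal.ofReal 4 ^ 2 := by
    rw [show 4 * (m + 2) = 2 * ((m + 2) / 2) * 4 by ring, ENNReal.ofReal_mul (by linarith),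
      ENNReal.ofReal_mul two_pos.le, ENNReal.ofReal_ofNat 2]
    ring
  rw [mul_div_cancel₀ _ two_ne_zero] at hball hsq
  rw [add_sub_cancel_right] at hsq
  calc ∫⁻ x in ball 0 R, ‖g x‖ₑ ^ (m + 2)
      ≤ 2 * (2 * ENNReal.ofReal ((m + 2) / 2) ^ 2 * (∫⁻ x in ball 0 R, ‖g x‖ₑ ^ m) *
          ∫⁻ x in ball 0 R, h1Density (R / 2) g x) := hball.trans (by gcongr)
    _ ≤ 2 * (2 * ENNReal.ofReal ((m + 2) / 2) ^ 2 * (∫⁻ x in ball 0 R, ‖g x‖ₑ ^ m) *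
          (ENNReal.ofReal 4 ^ 2 * ∫⁻ x in ball 0 R, h1Density r g x)) := by gcongr
    _ = _ := by
        rw [hconst]
        ring

variable (F) in
lemma exists_setLIntegral_ball_enorm_rpow_add_two_mul_le {m : ℝ} (hm : 0 < m) (k : ℕ) :
    ∃ C : ℝ≥0∞, C ≠ ⊤ ∧ ∀ R r : ℝ, 0 < r → r ≤ 2 * R → ∀ g : ℝ² → F, ContDiff ℝ 1 g →
      ∫⁻ x in ball 0 R, ‖g x‖ₑ ^ (m + 2 * k) ≤
        C * (∫⁻ x in ball 0 R, ‖g x‖ₑ ^ m) * (∫⁻ x in ball 0 R, h1Density r g x) ^ k := by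
  induction k with
  | zero => exact ⟨1, by finiteness, fun R r _ _ g _ => by simp⟩
  | succ k ih =>
    obtain ⟨C, hC, ih⟩ := ih
    refine ⟨ENNReal.ofReal (4 * (m + 2 * k + 2)) ^ 2 * C, by finiteness,
      fun R r hr hrR g hg => ?_⟩
    have hexp : m + 2 * (k + 1 : ℕ) = m + 2 * k + 2 := by
      push_cast
      ring
    rw [hexp]
    refine (setLIntegral_ball_enorm_rpow_add_two_le hr hrR hg (by positivity)).trans ?_
    calc _ ≤ ENNReal.ofReal (4 * (m + 2 * k + 2)) ^ 2 *
          (C * (∫⁻ x in ball 0 R, ‖g x‖ₑ ^ m) * (∫⁻ x in ball 0 R, h1Density r g x) ^ k) *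
            ∫⁻ x in ball 0 R, h1Density r g x := by
          gcongr
          exact ih R r hr hrR g hg
      _ = _ := by ring

variable (F) in
lemma exists_setLIntegral_ball_enorm_rpow_le {m q : ℝ} (hm : 0 < m) (hmq : m ≤ q) :
    ∃ C : ℝ≥0∞, C ≠ ⊤ ∧ ∀ R r : ℝ, 0 < r → r ≤ 2 * R → ∀ g : ℝ² → F, ContDiff ℝ 1 g →
      ∫⁻ x in ball 0 R, ‖g x‖ₑ ^ q ≤ C * (∫⁻ x in ball 0 R, ‖g x‖ₑ ^ m) *
        (∫⁻ x in ball 0 R, h1Density r g x) ^ ((q - m) / 2) := by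
  obtain ⟨k, hk⟩ := exists_nat_gt ((q - m) / 2)
  have hk₀ : (0 : ℝ) < k := lt_of_le_of_lt (by linarith) hk
  obtain ⟨C, hC, hCk⟩ := exists_setLIntegral_ball_enorm_rpow_add_two_mul_le F hm k
  set τ := (q - m) / 2 / k
  have hτ₀ : 0 ≤ τ := div_nonneg (by linarith) hk₀.le
  have hτ₁ : τ ≤ 1 := (div_le_one hk₀).2 hk.le
  have hkτ : (k : ℝ) * τ = (q - m) / 2 := mul_div_cancel₀ _ hk₀.ne'
  refine ⟨C ^ τ, by finiteness, fun R r hr hrR g hg => ?_⟩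
  set M := ∫⁻ x in ball 0 R, ‖g x‖ₑ ^ m
  set H := ∫⁻ x in ball 0 R, h1Density r g x
  calc ∫⁻ x in ball 0 R, ‖g x‖ₑ ^ q
      ≤ M ^ (1 - τ) * (∫⁻ x in ball 0 R, ‖g x‖ₑ ^ (m + 2 * k)) ^ τ :=
        lintegral_rpow_le_mul_rpow (measurable_enorm_of_contDiff hg).aemeasurable hm.le
          (by positivity) hτ₀ hτ₁ (by linear_combination -2 * hkτ)
    _ ≤ M ^ (1 - τ) * (C * M * H ^ k) ^ τ := by
        gcongr
        exact hCk R r hr hrR g hg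
    _ = C ^ τ * (M ^ (1 - τ) * M ^ τ) * H ^ ((q - m) / 2) := by
        rw [ENNReal.mul_rpow_of_nonneg _ _ hτ₀, ENNReal.mul_rpow_of_nonneg _ _ hτ₀,
          ← ENNReal.rpow_natCast, ← ENNReal.rpow_mul, hkτ]
        ring
    _ = C ^ τ * M * H ^ ((q - m) / 2) := by
        rw [← ENNReal.rpow_add_of_nonneg _ _ (by linarith) hτ₀, sub_add_cancel, ENNReal.rpow_one]

end Plane

/- Bound `‖f (x, z)‖ ^ s` on each vertical line by the one-dimensional inequality. -/
lemma sq_lintegral_slice_enorm_rpow_le {E F : Type*} [NormedAddCommGroup E] [NormedSpace ℝ E]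
    [MeasurableSpace E] [BorelSpace E] [SecondCountableTopology E] [NormedAddCommGroup F]
    [InnerProductSpace ℝ F] {μ : Measure E} {f : E × ℝ → F} (hf : ContDiff ℝ 1 f)
    {s : ℝ} (hs : 1 < s) {I : Set ℝ} [I.OrdConnected] {ℓ : ℝ} (hℓ : 0 < ℓ)
    (hIℓ : ENNReal.ofReal ℓ ≤ volume I) {z : ℝ} (hz : z ∈ I) :
    (∫⁻ x, ‖f (x, z)‖ₑ ^ s ∂μ) ^ 2 ≤ 2 * ENNReal.ofReal s ^ 2 *
      (∫⁻ y, ‖f y‖ₑ ^ (2 * s - 2) ∂(μ.prod (volume.restrict I))) *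
        ∫⁻ y, h1Density ℓ f y ∂(μ.prod (volume.restrict I)) := by
  refine le_trans ?_ (sq_lintegral_rpowDensity_le hf hs.le ℓ (μ.prod (volume.restrict I)))
  rw [lintegral_prod _ (measurable_rpowDensity hf ℓ s).aemeasurable]
  gcongr with x
  simpa using enorm_rpow_le_setLIntegral_rpowDensity hf hs (x, 0) (v := (0, 1)) (by simp) hℓ hIℓ hz

section Slices

variable {F : Type*} [NormedAddCommGroup F] [InnerProductSpace ℝ F]

/-- The integral of `‖f‖ ^ q` over the horizontal slice of the cylinder at height `z`. -/
def sliceLIntegral (R q : ℝ) (f : ℝ² × ℝ → F) (z : ℝ) : ℝ≥0∞ :=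
  ∫⁻ x in ball 0 R, ‖f (x, z)‖ₑ ^ q

/-- The integral of `h1Density r f` over the horizontal slice of the cylinder at height `z`. The
density involves the full gradient of `f`, not only the horizontal one. -/
def sliceH1 (R r : ℝ) (f : ℝ² × ℝ → F) (z : ℝ) : ℝ≥0∞ :=
  ∫⁻ x in ball 0 R, h1Density r f (x, z)

/-- The squared `L²` norm of `f` on the cylinder. -/
def cylMass (R r : ℝ) (f : ℝ² × ℝ → F) : ℝ≥0∞ :=
  ∫⁻ y in cylSet R r, ‖f y‖ₑ ^ 2

/-- The squared `H¹` norm of `f` on the cylinder, with lengths measured in units of its half-height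
`r`. -/
def cylH1 (R r : ℝ) (f : ℝ² × ℝ → F) : ℝ≥0∞ :=
  ∫⁻ y in cylSet R r, h1Density r f y

lemma volume_restrict_cylSet (R r : ℝ) :
    (volume : Measure (ℝ² × ℝ)).restrict (cylSet R r) =
      (volume.restrict (ball 0 R)).prod (volume.restrict (Set.Ioo (-r) r)) := by
  rw [Measure.prod_restrict, Measure.volume_eq_prod, cylSet]

section

variable {f : ℝ² × ℝ → F} (hf : ContDiff ℝ 1 f)
include hf

lemma measurable_sliceLIntegral (R q : ℝ) : Measurable (sliceLIntegral R q f) :=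
  ((measurable_enorm_of_contDiff hf).pow_const q).lintegral_prod_left'

lemma measurable_sliceH1 (R r : ℝ) : Measurable (sliceH1 R r f) :=
  (measurable_h1Density hf r).lintegral_prod_left'

lemma setLIntegral_sliceLIntegral (R r q : ℝ) :
    ∫⁻ z in Set.Ioo (-r) r, sliceLIntegral R q f z = ∫⁻ y in cylSet R r, ‖f y‖ₑ ^ q := by
  rw [volume_restrict_cylSet,
    lintegral_prod_symm _ ((measurable_enorm_of_contDiff hf).pow_const q).aemeasurable]
  rfl

lemma setLIntegral_sliceLIntegral_two (R r : ℝ) :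
    ∫⁻ z in Set.Ioo (-r) r, sliceLIntegral R 2 f z = cylMass R r f := by
  simp only [setLIntegral_sliceLIntegral hf, ENNReal.rpow_two, cylMass]

lemma setLIntegral_sliceH1 (R r : ℝ) :
    ∫⁻ z in Set.Ioo (-r) r, sliceH1 R r f z = cylH1 R r f := by
  rw [cylH1, volume_restrict_cylSet,
    lintegral_prod_symm _ (measurable_h1Density hf r).aemeasurable]
  rfl

lemma h1Density_slice_le (r z : ℝ) (x : ℝ²) :
    h1Density r (fun x => f (x, z)) x ≤ h1Density r f (x, z) := by
  have hslice : HasFDerivAt (fun x => f (x, z))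
      ((fderiv ℝ f (x, z)).comp (ContinuousLinearMap.inl ℝ ℝ² ℝ)) x :=
    (hf.differentiable one_ne_zero (x, z)).hasFDerivAt.comp x
      ((hasFDerivAt_id x).prodMk (hasFDerivAt_const z x))
  have hnorm : ‖fderiv ℝ (fun x => f (x, z)) x‖ ≤ ‖fderiv ℝ f (x, z)‖ := by
    rw [hslice.fderiv]
    exact (ContinuousLinearMap.opNorm_comp_le _ _).trans
      (mul_le_of_le_one_right (norm_nonneg _) (ContinuousLinearMap.norm_inl_le_one ℝ ℝ² ℝ))
  rw [h1Density, h1Density]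
  gcongr
  exact enorm_le_iff_norm_le.2 hnorm

lemma sq_sliceLIntegral_le (R : ℝ) {r : ℝ} {s : ℝ} (hs : 1 < s) {z : ℝ}
    (hz : z ∈ Set.Ioo (-r) r) :
    sliceLIntegral R s f z ^ 2 ≤ 2 * ENNReal.ofReal s ^ 2 *
      (∫⁻ z in Set.Ioo (-r) r, sliceLIntegral R (2 * s - 2) f z) * cylH1 R r f := by
  have hr : 0 < r := by linarith [hz.1, hz.2]
  have hlength : ENNReal.ofReal r ≤ volume (Set.Ioo (-r) r) := by
    rw [Real.volume_Ioo]
    exact ENNReal.ofReal_le_ofReal (by linarith)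
  rw [setLIntegral_sliceLIntegral hf, cylH1, volume_restrict_cylSet]
  exact sq_lintegral_slice_enorm_rpow_le hf hs hr hlength hz

lemma sliceLIntegral_two_le (R : ℝ) {r z : ℝ} (hz : z ∈ Set.Ioo (-r) r) :
    sliceLIntegral R 2 f z ≤ (8 * (cylMass R r f * cylH1 R r f)) ^ (1 / 2 : ℝ) := by
  rw [le_rpow_half_iff]
  refine (sq_sliceLIntegral_le hf R one_lt_two hz).trans_eq ?_
  rw [show (2 : ℝ) * 2 - 2 = 2 by norm_num, setLIntegral_sliceLIntegral_two hf,
    ENNReal.ofReal_ofNat]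
  ring

lemma iSup_sliceLIntegral_ne_top (R r : ℝ) {q : ℝ} (hq : 0 ≤ q) :
    ⨆ z ∈ Set.Ioo (-r) r, sliceLIntegral R q f z ≠ ⊤ := by
  obtain ⟨M, hM⟩ := ((isCompact_closedBall (0 : ℝ²) R).prod
    (isCompact_Icc (a := -r) (b := r))).exists_bound_of_continuousOn hf.continuous.continuousOn
  have hvol : volume (ball (0 : ℝ²) R) ≠ ⊤ := measure_ball_lt_top.ne
  refine ne_top_of_le_ne_top (b := ENNReal.ofReal M ^ q * volume (ball (0 : ℝ²) R))
    (by finiteness) (iSup₂_le fun z hz => ?_)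
  rw [sliceLIntegral, ← setLIntegral_const]
  refine setLIntegral_mono' measurableSet_ball fun x hx => ?_
  gcongr
  rw [← ofReal_norm]
  exact ENNReal.ofReal_le_ofReal (hM (x, z) ⟨ball_subset_closedBall hx, hz.1.le, hz.2.le⟩)

end

variable (F) in
lemma exists_sliceLIntegral_le {m q : ℝ} (hm : 0 < m) (hmq : m ≤ q) :
    ∃ C : ℝ≥0∞, C ≠ ⊤ ∧ ∀ R r : ℝ, 0 < r → r ≤ 2 * R → ∀ f : ℝ² × ℝ → F, ContDiff ℝ 1 f → ∀ z,
      sliceLIntegral R q f z ≤ C * sliceLIntegral R m f z * sliceH1 R r f z ^ ((q - m) / 2) := by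
  obtain ⟨C, hC, hGN⟩ := exists_setLIntegral_ball_enorm_rpow_le F hm hmq
  refine ⟨C, hC, fun R r hr hrR f hf z => ?_⟩
  refine (hGN R r hr hrR (fun x => f (x, z)) (hf.comp (by fun_prop))).trans ?_
  have : 0 ≤ (q - m) / 2 := by linarith
  rw [sliceLIntegral, sliceH1]
  gcongr with x
  exact h1Density_slice_le hf r z x

variable (F) in
/- Gagliardo–Nirenberg bounds `∫ ‖f‖ ^ 6` on the cylinder by `C * M * X`, where `M` is the supremum
of the slice integrals and `X` is `cylH1`, so the vertical inequality with `s = 4` reads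
`M ^ 2 ≤ C * X ^ 2 * M`, and `M` cancels because it is finite. -/
lemma exists_sliceLIntegral_four_le :
    ∃ C : ℝ≥0∞, C ≠ ⊤ ∧ ∀ R r : ℝ, r ≤ 2 * R → ∀ f : ℝ² × ℝ → F, ContDiff ℝ 1 f →
      ∀ z ∈ Set.Ioo (-r) r, sliceLIntegral R 4 f z ≤ C * cylH1 R r f ^ 2 := by
  obtain ⟨C, hC, hGN⟩ := exists_sliceLIntegral_le F (m := 4) (q := 6) (by norm_num) (by norm_num)
  refine ⟨2 * ENNReal.ofReal 4 ^ 2 * C, by finiteness, fun R r hrR f hf z₀ hz₀ => ?_⟩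
  have hr : 0 < r := by linarith [hz₀.1, hz₀.2]
  set X := cylH1 R r f
  set M := ⨆ z ∈ Set.Ioo (-r) r, sliceLIntegral R 4 f z
  have hle_M : ∀ z ∈ Set.Ioo (-r) r, sliceLIntegral R 4 f z ≤ M := fun z hz =>
    le_iSup₂_of_le z hz le_rfl
  have hM_ne_top : M ≠ ⊤ := iSup_sliceLIntegral_ne_top hf R r (by norm_num)
  have hsix : ∫⁻ z in Set.Ioo (-r) r, sliceLIntegral R 6 f z ≤ C * M * X := by
    calc ∫⁻ z in Set.Ioo (-r) r, sliceLIntegral R 6 f z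
        ≤ ∫⁻ z in Set.Ioo (-r) r, C * M * sliceH1 R r f z :=
          setLIntegral_mono' measurableSet_Ioo fun z hz => by
            refine (hGN R r hr hrR f hf z).trans ?_
            rw [show ((6 : ℝ) - 4) / 2 = 1 by norm_num, ENNReal.rpow_one]
            gcongr
            exact hle_M z hz
      _ = C * M * X := by
          rw [lintegral_const_mul _ (measurable_sliceH1 hf R r), setLIntegral_sliceH1 hf]
  have hM_sq : M ^ 2 ≤ 2 * ENNReal.ofReal 4 ^ 2 * C * X ^ 2 * M := by
    refine le_rpow_half_iff.1 (iSup₂_le fun z hz => le_rpow_half_iff.2 ?_)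
    refine (sq_sliceLIntegral_le hf R (by norm_num) hz).trans ?_
    rw [show (2 : ℝ) * 4 - 2 = 6 by norm_num]
    calc 2 * ENNReal.ofReal 4 ^ 2 * (∫⁻ z in Set.Ioo (-r) r, sliceLIntegral R 6 f z) * X
        ≤ 2 * ENNReal.ofReal 4 ^ 2 * (C * M * X) * X := by gcongr
      _ = _ := by ring
  refine (hle_M z₀ hz₀).trans ?_
  rcases eq_or_ne M 0 with hM₀ | hM₀
  · rw [hM₀]
    exact zero_le
  · rw [sq M] at hM_sq
    exact (ENNReal.mul_le_mul_iff_left hM₀ hM_ne_top).1 hM_sq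

variable (F) in
lemma exists_sliceLIntegral_le_cylMass_mul_cylH1 {m : ℝ} (hm₂ : 2 ≤ m) (hm₄ : m ≤ 4) :
    ∃ C : ℝ≥0∞, C ≠ ⊤ ∧ ∀ R r : ℝ, r ≤ 2 * R → ∀ f : ℝ² × ℝ → F, ContDiff ℝ 1 f →
      ∀ z ∈ Set.Ioo (-r) r, sliceLIntegral R m f z ≤
        C * cylMass R r f ^ ((4 - m) / 4) * cylH1 R r f ^ ((3 * m - 4) / 4) := by
  obtain ⟨C, hC, hfour⟩ := exists_sliceLIntegral_four_le F
  have hτ₀ : 0 ≤ (m - 2) / 2 := by linarith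
  have hσ₀ : 0 ≤ (4 - m) / 4 := by linarith
  refine ⟨8 ^ ((4 - m) / 4) * C ^ ((m - 2) / 2), by finiteness, fun R r hrR f hf z hz => ?_⟩
  set A := cylMass R r f
  set X := cylH1 R r f
  calc sliceLIntegral R m f z
      ≤ sliceLIntegral R 2 f z ^ (1 - (m - 2) / 2) * sliceLIntegral R 4 f z ^ ((m - 2) / 2) :=
        lintegral_rpow_le_mul_rpow
          ((measurable_enorm_of_contDiff hf).comp measurable_prodMk_right).aemeasurable
          two_pos.le four_pos.le hτ₀ (by linarith) (by ring)
    _ ≤ ((8 * (A * X)) ^ (1 / 2 : ℝ)) ^ (1 - (m - 2) / 2) * (C * X ^ 2) ^ ((m - 2) / 2) := by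
        refine mul_le_mul' (ENNReal.rpow_le_rpow (sliceLIntegral_two_le hf R hz) (by linarith)) ?_
        exact ENNReal.rpow_le_rpow (hfour R r hrR f hf z hz) hτ₀
    _ = 8 ^ ((4 - m) / 4) * (A ^ ((4 - m) / 4) * X ^ ((4 - m) / 4)) *
          (C ^ ((m - 2) / 2) * X ^ (m - 2)) := by
        rw [← ENNReal.rpow_mul, show 1 / 2 * (1 - (m - 2) / 2) = (4 - m) / 4 by ring,
          ENNReal.mul_rpow_of_nonneg _ _ hσ₀, ENNReal.mul_rpow_of_nonneg _ _ hσ₀,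
          ENNReal.mul_rpow_of_nonneg _ _ hτ₀, ← ENNReal.rpow_two, ← ENNReal.rpow_mul,
          mul_div_cancel₀ _ two_ne_zero]
    _ = _ := by
        rw [show (3 * m - 4) / 4 = (4 - m) / 4 + (m - 2) by ring,
          ENNReal.rpow_add_of_nonneg _ _ hσ₀ (by linarith)]
        ring

end Slices

section Cylinder

variable (F : Type*) [NormedAddCommGroup F] [InnerProductSpace ℝ F]

/- Of the slice mass raised to the power `α`, the excess over the exponent `1 - e` for which
Hölder's inequality in the height applies is estimated by the supremum. -/
lemma exists_sliceLIntegral_rpow_le {q α e : ℝ} (hq : 2 ≤ q) (hα : 0 < α) (he : e ≤ 1)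
    (hαe : 1 ≤ α + e) (hαq : α * q = 2 * α + 2 * e) :
    ∃ C : ℝ≥0∞, C ≠ ⊤ ∧ ∀ R r : ℝ, r ≤ 2 * R → ∀ f : ℝ² × ℝ → F, ContDiff ℝ 1 f →
      ∀ z ∈ Set.Ioo (-r) r, sliceLIntegral R q f z ^ α ≤
        C * (cylMass R r f * cylH1 R r f) ^ ((α + e - 1) / 2) *
          (sliceLIntegral R 2 f z ^ (1 - e) * sliceH1 R r f z ^ e) := by
  obtain ⟨C, hC, hGN⟩ := exists_sliceLIntegral_le F two_pos hq
  have hκ₀ : 0 ≤ (α + e - 1) / 2 := by linarith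
  refine ⟨C ^ α * 8 ^ ((α + e - 1) / 2), by finiteness, fun R r hrR f hf z hz => ?_⟩
  have hr : 0 < r := by linarith [hz.1, hz.2]
  set AX := cylMass R r f * cylH1 R r f
  have hsup : sliceLIntegral R 2 f z ^ (α + e - 1) ≤
      8 ^ ((α + e - 1) / 2) * AX ^ ((α + e - 1) / 2) := by
    refine (ENNReal.rpow_le_rpow (sliceLIntegral_two_le hf R hz) (by linarith)).trans_eq ?_
    rw [← ENNReal.rpow_mul, one_div_mul_eq_div, ENNReal.mul_rpow_of_nonneg _ _ hκ₀]
  calc sliceLIntegral R q f z ^ α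
      ≤ (C * sliceLIntegral R 2 f z * sliceH1 R r f z ^ ((q - 2) / 2)) ^ α :=
        ENNReal.rpow_le_rpow (hGN R r hr hrR f hf z) hα.le
    _ = C ^ α * (sliceLIntegral R 2 f z ^ (α + e - 1) * sliceLIntegral R 2 f z ^ (1 - e)) *
          sliceH1 R r f z ^ e := by
        rw [ENNReal.mul_rpow_of_nonneg _ _ hα.le, ENNReal.mul_rpow_of_nonneg _ _ hα.le,
          ← ENNReal.rpow_mul, ← ENNReal.rpow_add_of_nonneg _ _ (by linarith) (by linarith),
          show α + e - 1 + (1 - e) = α by ring,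
          show (q - 2) / 2 * α = e by linear_combination hαq / 2]
    _ ≤ C ^ α * (8 ^ ((α + e - 1) / 2) * AX ^ ((α + e - 1) / 2) *
          sliceLIntegral R 2 f z ^ (1 - e)) * sliceH1 R r f z ^ e := by gcongr
    _ = _ := by ring

variable {F} in
lemma setLIntegral_sliceLIntegral_two_rpow_mul_sliceH1_rpow_le {f : ℝ² × ℝ → F}
    (hf : ContDiff ℝ 1 f) (R r : ℝ) {e : ℝ} (he₀ : 0 ≤ e) (he₁ : e ≤ 1) :
    ∫⁻ z in Set.Ioo (-r) r, sliceLIntegral R 2 f z ^ (1 - e) * sliceH1 R r f z ^ e ≤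
      cylMass R r f ^ (1 - e) * cylH1 R r f ^ e := by
  rw [← setLIntegral_sliceLIntegral_two hf, ← setLIntegral_sliceH1 hf]
  exact ENNReal.lintegral_mul_norm_pow_le (measurable_sliceLIntegral hf R 2).aemeasurable
    (measurable_sliceH1 hf R r).aemeasurable (sub_nonneg.2 he₁) he₀ (sub_add_cancel 1 e)

lemma exists_setLIntegral_sliceLIntegral_rpow_le_of_mul_le {q α : ℝ} (hq : 2 ≤ q) (hα : 0 < α)
    (hαq : 2 ≤ α * q) (hαq' : α * q ≤ 2 * α + 2) :
    ∃ C : ℝ≥0∞, C ≠ ⊤ ∧ ∀ R r : ℝ, r ≤ 2 * R → ∀ f : ℝ² × ℝ → F, ContDiff ℝ 1 f →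
      ∫⁻ z in Set.Ioo (-r) r, sliceLIntegral R q f z ^ α ≤
        C * cylMass R r f ^ (1 / 2 + α - α * q / 4) *
          cylH1 R r f ^ (3 * (α * q) / 4 - 1 / 2 - α) := by
  obtain ⟨e, he⟩ : ∃ e, e = α * q / 2 - α := ⟨_, rfl⟩
  have he₀ : 0 ≤ e := by nlinarith
  have he₁ : e ≤ 1 := by linarith
  have hκ₀ : 0 ≤ (α + e - 1) / 2 := by linarith
  obtain ⟨C, hC, hslice⟩ :=
    exists_sliceLIntegral_rpow_le F hq hα he₁ (by linarith) (by linear_combination -2 * he)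
  refine ⟨C, hC, fun R r hrR f hf => ?_⟩
  set A := cylMass R r f
  set X := cylH1 R r f
  calc ∫⁻ z in Set.Ioo (-r) r, sliceLIntegral R q f z ^ α
      ≤ ∫⁻ z in Set.Ioo (-r) r, C * (A * X) ^ ((α + e - 1) / 2) *
          (sliceLIntegral R 2 f z ^ (1 - e) * sliceH1 R r f z ^ e) :=
        setLIntegral_mono' measurableSet_Ioo (hslice R r hrR f hf)
    _ = C * (A * X) ^ ((α + e - 1) / 2) * ∫⁻ z in Set.Ioo (-r) r,
          sliceLIntegral R 2 f z ^ (1 - e) * sliceH1 R r f z ^ e := by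
        have := measurable_sliceLIntegral hf R 2
        have := measurable_sliceH1 hf R r
        rw [lintegral_const_mul _ (by fun_prop)]
    _ ≤ C * (A * X) ^ ((α + e - 1) / 2) * (A ^ (1 - e) * X ^ e) := by
        gcongr
        exact setLIntegral_sliceLIntegral_two_rpow_mul_sliceH1_rpow_le hf R r he₀ he₁
    _ = _ := by
        rw [ENNReal.mul_rpow_of_nonneg _ _ hκ₀,
          show 1 / 2 + α - α * q / 4 = (α + e - 1) / 2 + (1 - e) by linear_combination he / 2,
          show 3 * (α * q) / 4 - 1 / 2 - α = (α + e - 1) / 2 + e by linear_combination -3 / 2 * he,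
          ENNReal.rpow_add_of_nonneg _ _ hκ₀ (by linarith), ENNReal.rpow_add_of_nonneg _ _ hκ₀ he₀]
        ring

/- The exponent `m = q - 2 / α` makes the gradient in the slice inequality appear to the power one
in the integral, so that the remaining factor can be bounded uniformly in the height. -/
lemma exists_setLIntegral_sliceLIntegral_rpow_le_of_le_mul {q α : ℝ} (hα : 0 < α)
    (hαq : 2 * α + 2 ≤ α * q) (hαq' : α * q ≤ 4 * α + 2) :
    ∃ C : ℝ≥0∞, C ≠ ⊤ ∧ ∀ R r : ℝ, r ≤ 2 * R → ∀ f : ℝ² × ℝ → F, ContDiff ℝ 1 f →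
      ∫⁻ z in Set.Ioo (-r) r, sliceLIntegral R q f z ^ α ≤
        C * cylMass R r f ^ (1 / 2 + α - α * q / 4) *
          cylH1 R r f ^ (3 * (α * q) / 4 - 1 / 2 - α) := by
  set m := q - 2 / α with hm
  have hαm : α * m = α * q - 2 := by
    rw [hm, mul_sub, mul_div_cancel₀ _ hα.ne']
  have hm₂ : 2 ≤ m := le_of_mul_le_mul_left (by linarith) hα
  have hm₄ : m ≤ 4 := le_of_mul_le_mul_left (by linarith) hα
  have hmq : m ≤ q := sub_le_self q (by positivity)
  obtain ⟨C, hC, hGN⟩ := exists_sliceLIntegral_le F (by linarith) hmq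
  obtain ⟨C', hC', hsup⟩ := exists_sliceLIntegral_le_cylMass_mul_cylH1 F hm₂ hm₄
  refine ⟨(C * C') ^ α, by finiteness, fun R r hrR f hf => ?_⟩
  set A := cylMass R r f
  set X := cylH1 R r f
  set K := C' * A ^ ((4 - m) / 4) * X ^ ((3 * m - 4) / 4) with hK
  calc ∫⁻ z in Set.Ioo (-r) r, sliceLIntegral R q f z ^ α
      ≤ ∫⁻ z in Set.Ioo (-r) r, (C * K) ^ α * sliceH1 R r f z :=
        setLIntegral_mono' measurableSet_Ioo fun z hz => by
          have hr : 0 < r := by linarith [hz.1, hz.2]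
          calc sliceLIntegral R q f z ^ α
              ≤ (C * K * sliceH1 R r f z ^ ((q - m) / 2)) ^ α := by
                gcongr
                refine (hGN R r hr hrR f hf z).trans ?_
                gcongr
                exact hsup R r hrR f hf z hz
            _ = (C * K) ^ α * sliceH1 R r f z := by
                rw [ENNReal.mul_rpow_of_nonneg _ _ hα.le, ← ENNReal.rpow_mul,
                  show (q - m) / 2 * α = 1 by linear_combination -hαm / 2, ENNReal.rpow_one]
    _ = (C * K) ^ α * X := by
        rw [lintegral_const_mul _ (measurable_sliceH1 hf R r), setLIntegral_sliceH1 hf]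
    _ = (C * C') ^ α * A ^ (1 / 2 + α - α * q / 4) * (X ^ ((3 * m - 4) / 4 * α) * X) := by
        rw [hK, ← mul_assoc, ← mul_assoc, ENNReal.mul_rpow_of_nonneg _ _ hα.le,
          ENNReal.mul_rpow_of_nonneg _ _ hα.le, ← ENNReal.rpow_mul, ← ENNReal.rpow_mul,
          show (4 - m) / 4 * α = 1 / 2 + α - α * q / 4 by linear_combination -hαm / 4, mul_assoc]
    _ = _ := by
        rw [← rpow_sub_one_mul_self X (s := 3 * (α * q) / 4 - 1 / 2 - α) (by linarith)]
        congr 3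
        linear_combination 3 / 4 * hαm

lemma exists_setLIntegral_sliceLIntegral_rpow_le {q α : ℝ} (hq : 2 ≤ q) (hα : 0 < α)
    (hαq : 2 ≤ α * q) (hαq' : α * q ≤ 4 * α + 2) :
    ∃ C : ℝ≥0∞, C ≠ ⊤ ∧ ∀ R r : ℝ, r ≤ 2 * R → ∀ f : ℝ² × ℝ → F, ContDiff ℝ 1 f →
      ∫⁻ z in Set.Ioo (-r) r, sliceLIntegral R q f z ^ α ≤
        C * cylMass R r f ^ (1 / 2 + α - α * q / 4) *
          cylH1 R r f ^ (3 * (α * q) / 4 - 1 / 2 - α) := by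
  rcases le_total (α * q) (2 * α + 2) with h | h
  · exact exists_setLIntegral_sliceLIntegral_rpow_le_of_mul_le F hq hα hαq h
  · exact exists_setLIntegral_sliceLIntegral_rpow_le_of_le_mul F hα h hαq'

end Cylinder

lemma enorm_aniNormR_le (f : ℝ² × ℝ → ℝ) (R r : ℝ) {qv qh : ℝ} (hqv : 0 ≤ qv) (hqh : 0 ≤ qh) :
    ‖aniNormR f R r qv qh‖ₑ ≤
      (∫⁻ z in Set.Ioo (-r) r, sliceLIntegral R qh f z ^ (qv / qh)) ^ (1 / qv) := by
  have hslice : ∀ z, ‖∫ x in ball 0 R, |f (x, z)| ^ qh‖ₑ ≤ sliceLIntegral R qh f z := fun z => by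
    refine (enorm_integral_le_lintegral_enorm _).trans_eq (lintegral_congr fun x => ?_)
    rw [Real.enorm_rpow_of_nonneg (abs_nonneg _) hqh, Real.enorm_abs]
  have hslice_nonneg : ∀ z, 0 ≤ ∫ x in ball 0 R, |f (x, z)| ^ qh := fun z => by positivity
  rw [aniNormR, Real.enorm_rpow_of_nonneg (by positivity) (by positivity)]
  gcongr
  refine (enorm_integral_le_lintegral_enorm _).trans (lintegral_mono fun z => ?_)
  rw [Real.enorm_rpow_of_nonneg (hslice_nonneg z) (by positivity)]
  gcongr
  exact hslice z

lemma exists_enorm_aniNormR_le {qv qh θ : ℝ} (hqh : 2 ≤ qh) (hqv : 2 ≤ qv) (hθ₁ : θ ≤ 1)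
    (hθ : θ + 2 / qh + 1 / qv = 3 / 2) :
    ∃ C : ℝ≥0∞, C ≠ ⊤ ∧ ∀ R r : ℝ, r ≤ 2 * R → ∀ f : ℝ² × ℝ → ℝ, ContDiff ℝ 1 f →
      ‖aniNormR f R r qv qh‖ₑ ≤ C * cylMass R r f ^ ((1 - θ) / 2) * cylH1 R r f ^ (θ / 2) := by
  have hqv₀ : 0 < qv := by linarith
  have hqh₀ : 0 < qh := by linarith
  have hmul : qv / qh * qh = qv := div_mul_cancel₀ qv hqh₀.ne'
  have hθqv : qv * θ = 3 / 2 * qv - 2 * (qv / qh) - 1 := by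
    rw [show θ = 3 / 2 - 2 / qh - 1 / qv by linarith]
    field_simp
  obtain ⟨C, hC, hcyl⟩ := exists_setLIntegral_sliceLIntegral_rpow_le ℝ (α := qv / qh) hqh
    (by positivity) (by rwa [hmul]) (by rw [hmul]; nlinarith)
  refine ⟨C ^ (1 / qv), by finiteness, fun R r hrR f hf => ?_⟩
  refine (enorm_aniNormR_le f R r hqv₀.le hqh₀.le).trans ?_
  refine (ENNReal.rpow_le_rpow (hcyl R r hrR f hf) (by positivity)).trans_eq ?_
  have hA : (1 / 2 + qv / qh - qv / 4) * (1 / qv) = (1 - θ) / 2 := by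
    rw [mul_one_div, div_eq_iff hqv₀.ne']
    linear_combination hθqv / 2
  have hX : (3 * qv / 4 - 1 / 2 - qv / qh) * (1 / qv) = θ / 2 := by
    rw [mul_one_div, div_eq_iff hqv₀.ne']
    linear_combination -hθqv / 2
  rw [hmul, ENNReal.mul_rpow_of_nonneg _ _ (by positivity),
    ENNReal.mul_rpow_of_nonneg _ _ (by positivity), ← ENNReal.rpow_mul, ← ENNReal.rpow_mul, hA, hX]

section Energy

lemma ofReal_norm_sq {G : Type*} [SeminormedAddCommGroup G] (x : G) :
    ENNReal.ofReal (‖x‖ ^ 2) = ‖x‖ₑ ^ 2 := by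
  rw [ENNReal.ofReal_pow (norm_nonneg _), ofReal_norm]

lemma energy_eq (u : ℝ → ℝ² × ℝ → ℝ) (R r : ℝ) :
    energy u R r = (⨆ t ∈ Set.Ioo (-r ^ 2) (0 : ℝ), cylMass R r (u t)) +
      ∫⁻ t in Set.Ioo (-r ^ 2) (0 : ℝ), ∫⁻ y in cylSet R r, ‖fderiv ℝ (u t) y‖ₑ ^ 2 := by
  simp only [energy, cylMass, ofReal_norm_sq, ← Real.norm_eq_abs]

lemma cylMass_le_energy (u : ℝ → ℝ² × ℝ → ℝ) (R : ℝ) {r t : ℝ}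
    (ht : t ∈ Set.Ioo (-r ^ 2) (0 : ℝ)) : cylMass R r (u t) ≤ energy u R r := by
  rw [energy_eq]
  exact le_add_right (le_iSup₂_of_le t ht le_rfl)

lemma cylH1_eq {f : ℝ² × ℝ → ℝ} (hf : ContDiff ℝ 1 f) (R r : ℝ) :
    cylH1 R r f = (∫⁻ y in cylSet R r, ‖fderiv ℝ f y‖ₑ ^ 2) +
      (ENNReal.ofReal r)⁻¹ ^ 2 * cylMass R r f := by
  simp only [cylH1, h1Density, cylMass]
  have hfm := (measurable_enorm_of_contDiff hf).pow_const 2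
  rw [lintegral_add_right _ (hfm.const_mul _), lintegral_const_mul _ hfm]

/- The weight `r⁻²` of `cylMass` is cancelled by the length `r²` of the time interval. -/
lemma setLIntegral_cylH1_le_energy {u : ℝ → ℝ² × ℝ → ℝ} (R : ℝ) {r : ℝ} (hr : 0 < r)
    (hu : ∀ t ∈ Set.Ioo (-r ^ 2) 0, ContDiff ℝ 1 (u t)) :
    ∫⁻ t in Set.Ioo (-r ^ 2) 0, cylH1 R r (u t) ≤ energy u R r := by
  rw [energy_eq]
  set S := ⨆ t ∈ Set.Ioo (-r ^ 2) (0 : ℝ), cylMass R r (u t)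
  have hweight : (ENNReal.ofReal r)⁻¹ ^ 2 * S * volume (Set.Ioo (-r ^ 2) 0) = S := by
    rw [Real.volume_Ioo, zero_sub, neg_neg, ENNReal.ofReal_pow hr.le, mul_right_comm, ← mul_pow,
      ENNReal.inv_mul_cancel (by simpa using hr) ofReal_ne_top, one_pow, one_mul]
  calc ∫⁻ t in Set.Ioo (-r ^ 2) 0, cylH1 R r (u t)
      ≤ ∫⁻ t in Set.Ioo (-r ^ 2) 0, ((∫⁻ y in cylSet R r, ‖fderiv ℝ (u t) y‖ₑ ^ 2) +
          (ENNReal.ofReal r)⁻¹ ^ 2 * S) :=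
        setLIntegral_mono' measurableSet_Ioo fun t ht => by
          rw [cylH1_eq (hu t ht)]
          gcongr
          exact le_iSup₂_of_le t ht le_rfl
    _ = _ := by rw [lintegral_add_right _ measurable_const, setLIntegral_const, hweight, add_comm]

end Energy

lemma eLpNorm_le_of_enorm_le_mul_rpow {α ε : Type*} [MeasurableSpace α] {μ : Measure α} [ENorm ε]
    {N : α → ε} {X : α → ℝ≥0∞} {K E p : ℝ≥0∞} (hK : K ≠ ⊤) (hE : E ≠ ⊤) (hp : 2 ≤ p)
    (hN : ∀ᵐ t ∂μ, ‖N t‖ₑ ≤ K * E ^ ((1 - (2 / p).toReal) / 2) * X t ^ ((2 / p).toReal / 2))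
    (hX : ∫⁻ t, X t ∂μ ≤ E) :
    eLpNorm N p μ ≤ K * E ^ (1 / 2 : ℝ) := by
  rcases eq_or_ne p ⊤ with rfl | hp_top
  · refine eLpNormEssSup_le_of_ae_enorm_bound ?_
    simpa using hN
  · have hp₀ : p ≠ 0 := (two_pos.trans_le hp).ne'
    set P := p.toReal with hP
    have hP₂ : 2 ≤ P := by simpa using ENNReal.toReal_mono hp_top hp
    have hθ : (2 / p).toReal = 2 / P := by simp [hP]
    have hκ₀ : 0 ≤ P / 2 - 1 := by linarith
    rw [hθ] at hN
    rw [eLpNorm_eq_lintegral_rpow_enorm_toReal hp₀ hp_top, one_div,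
      ENNReal.rpow_inv_le_iff (by linarith)]
    calc ∫⁻ t, ‖N t‖ₑ ^ P ∂μ ≤ ∫⁻ t, K ^ P * E ^ (P / 2 - 1) * X t ∂μ := by
          refine lintegral_mono_ae (hN.mono fun t ht => ?_)
          refine (ENNReal.rpow_le_rpow ht (by linarith)).trans_eq ?_
          rw [ENNReal.mul_rpow_of_nonneg _ _ (by linarith),
            ENNReal.mul_rpow_of_nonneg _ _ (by linarith), ← ENNReal.rpow_mul, ← ENNReal.rpow_mul,
            show (1 - 2 / P) / 2 * P = P / 2 - 1 by field_simp,
            show 2 / P / 2 * P = 1 by field_simp, ENNReal.rpow_one]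
      _ = K ^ P * E ^ (P / 2 - 1) * ∫⁻ t, X t ∂μ := lintegral_const_mul' _ _ (by finiteness)
      _ ≤ K ^ P * E ^ (P / 2 - 1) * E := by gcongr
      _ = (K * E ^ (1 / 2 : ℝ)) ^ P := by
          rw [mul_assoc, rpow_sub_one_mul_self _ (by linarith),
            ENNReal.mul_rpow_of_nonneg _ _ (by linarith), ← ENNReal.rpow_mul, one_div_mul_eq_div]

theorem stmt7_general (p : ℝ≥0∞) (qh qv : ℝ) (hp : 2 ≤ p) (hqh : 2 ≤ qh) (hqv : 2 ≤ qv)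
    (hexp : (2 / p).toReal + 2 / qh + 1 / qv = 3 / 2) :
    ∃ C : ℝ≥0∞, 0 < C ∧ C ≠ ⊤ ∧
      ∀ (R r : ℝ), 0 < r → r ≤ 2 * R → ∀ u : ℝ → EuclideanSpace ℝ (Fin 2) × ℝ → ℝ,
        (∀ s ∈ Set.Ioo (-r ^ 2) 0, ContDiff ℝ 1 (u s)) →
        (eLpNorm (fun t => aniNormR (u t) R r qv qh) p
            (volume.restrict (Set.Ioo (-r ^ 2) 0))) ^ 2 ≤ C * energy u R r := by
  have hθ₁ : (2 / p).toReal ≤ 1 := by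
    have h2p : 2 / p ≤ 1 := ENNReal.div_le_of_le_mul (by rwa [one_mul])
    simpa using ENNReal.toReal_mono one_ne_top h2p
  obtain ⟨K, hK, hslab⟩ := exists_enorm_aniNormR_le hqh hqv hθ₁ hexp
  refine ⟨K ^ 2 + 1, by positivity, by finiteness, fun R r hr hrR u hu => ?_⟩
  rcases eq_or_ne (energy u R r) ⊤ with hE | hE
  · simp [hE]
  · have hpointwise : ∀ t ∈ Set.Ioo (-r ^ 2) 0, ‖aniNormR (u t) R r qv qh‖ₑ ≤
        K * energy u R r ^ ((1 - (2 / p).toReal) / 2) * cylH1 R r (u t) ^ ((2 / p).toReal / 2) :=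
      fun t ht => by
        refine (hslab R r hrR (u t) (hu t ht)).trans ?_
        have hA : cylMass R r (u t) ^ ((1 - (2 / p).toReal) / 2) ≤
            energy u R r ^ ((1 - (2 / p).toReal) / 2) :=
          ENNReal.rpow_le_rpow (cylMass_le_energy u R ht) (by linarith)
        gcongr
    have hnorm := eLpNorm_le_of_enorm_le_mul_rpow hK hE hp
      ((ae_restrict_mem measurableSet_Ioo).mono hpointwise) (setLIntegral_cylH1_le_energy R hr hu)
    calc _ ≤ (K * energy u R r ^ (1 / 2 : ℝ)) ^ 2 := by gcongr
      _ = K ^ 2 * energy u R r := by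
        rw [mul_pow, ← ENNReal.rpow_two (energy u R r ^ _), ← ENNReal.rpow_mul,
          one_div_mul_cancel two_ne_zero, ENNReal.rpow_one]
      _ ≤ (K ^ 2 + 1) * energy u R r := by
        gcongr
        exact le_self_add

/-- Lemma 2.1: for `R ≥ 1/2`, `2 ≤ p ≤ ∞`, `2 ≤ q_h, q_v < ∞` with
`2/p + 2/q_h + 1/q_v = 3/2`,
`‖u‖²_{L^p(−r_n²,0; L^{q_v}_v L^{q_h}_h(U_n(R)))} ≤ C E_n(R)`, with `C` independent of `n`. -/
theorem stmt7 (R : ℝ) (p : ℝ≥0∞) (qh qv : ℝ)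
    (hR : 1 / 2 ≤ R) (hp : 2 ≤ p) (hqh : 2 ≤ qh) (hqv : 2 ≤ qv)
    (hexp : (2 / p).toReal + 2 / qh + 1 / qv = 3 / 2) :
    ∃ C : ℝ≥0∞, 0 < C ∧ C ≠ ⊤ ∧
      ∀ (n : ℕ) (u : ℝ → EuclideanSpace ℝ (Fin 2) × ℝ → ℝ),
        Measurable (Function.uncurry u) → (∀ s : ℝ, ContDiff ℝ 1 (u s)) →
        energy u R ((2 : ℝ) ^ (-(n : ℝ))) ≠ ⊤ →
        (eLpNorm (fun t => aniNormR (u t) R ((2 : ℝ) ^ (-(n : ℝ))) qv qh) p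
            (volume.restrict (Set.Ioo (-(((2 : ℝ) ^ (-(n : ℝ))) ^ 2)) 0))) ^ 2 ≤
          C * energy u R ((2 : ℝ) ^ (-(n : ℝ))) := by
  obtain ⟨C, hC₀, hC, h⟩ := stmt7_general p qh qv hp hqh hqv hexp
  refine ⟨C, hC₀, hC, fun n u _ hu _ => h R _ (by positivity) ?_ u fun s _ => hu s⟩
  exact (Real.rpow_le_one_of_one_le_of_nonpos one_le_two (by simp)).trans (by linarith)
end
end
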